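/- For 1 ≤ i, i' ≤ n²/2 and j, j' ∈ {0,1}, the left u-modules S_{2i,j} and S_{2i',j'} are isomorphic if and only if i = i' and j = j'. -/

import Mathlib

noncomputable section

open scoped TensorProduct

namespace QFL

/-- The defining relations of the quasi-Frobenius-Lusztig kernel `ũ_q(sl₂)`,
on the free algebra on four generators `K = ι 0`, `K̂ = ι 1`, `E = ι 2`, `F = ι 3`. -/
inductive Rel (k : Type) [Field k] (n : ℕ) (q : k) :
    FreeAlgebra k (Fin 4) → FreeAlgebra k (Fin 4) → Prop
  | Kord : Rel k n q (FreeAlgebra.ι k (0 : Fin 4) ^ n) 1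
  | Khord : Rel k n q (FreeAlgebra.ι k (1 : Fin 4) ^ n)
      ((FreeAlgebra.ι k (0 : Fin 4) ^ (n - 1)) ^ 2)
  | KKh : Rel k n q (FreeAlgebra.ι k (0 : Fin 4) * FreeAlgebra.ι k (1 : Fin 4))
      (FreeAlgebra.ι k (1 : Fin 4) * FreeAlgebra.ι k (0 : Fin 4))
  | KE : Rel k n q
      (FreeAlgebra.ι k (0 : Fin 4) * FreeAlgebra.ι k (2 : Fin 4) *
        FreeAlgebra.ι k (0 : Fin 4) ^ (n - 1))
      (q ^ n • FreeAlgebra.ι k (2 : Fin 4))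
  | KF : Rel k n q
      (FreeAlgebra.ι k (0 : Fin 4) * FreeAlgebra.ι k (3 : Fin 4) *
        FreeAlgebra.ι k (0 : Fin 4) ^ (n - 1))
      ((q ^ n)⁻¹ • FreeAlgebra.ι k (3 : Fin 4))
  | KhE : Rel k n q
      (FreeAlgebra.ι k (1 : Fin 4) * FreeAlgebra.ι k (2 : Fin 4) *
        FreeAlgebra.ι k (1 : Fin 4) ^ (n ^ 2 - 1))
      ((q ^ n * (q ^ 2)⁻¹) • FreeAlgebra.ι k (2 : Fin 4))
  | KhF : Rel k n q
      (FreeAlgebra.ι k (1 : Fin 4) * FreeAlgebra.ι k (3 : Fin 4) *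
        FreeAlgebra.ι k (1 : Fin 4) ^ (n ^ 2 - 1))
      (((q ^ n)⁻¹ * q ^ 2) • FreeAlgebra.ι k (3 : Fin 4))
  | Enil : Rel k n q (FreeAlgebra.ι k (2 : Fin 4) ^ n ^ 2) 0
  | Fnil : Rel k n q (FreeAlgebra.ι k (3 : Fin 4) ^ n ^ 2) 0
  | EF : Rel k n q
      (FreeAlgebra.ι k (3 : Fin 4) * FreeAlgebra.ι k (2 : Fin 4) -
        q⁻¹ • (FreeAlgebra.ι k (2 : Fin 4) * FreeAlgebra.ι k (3 : Fin 4)))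
      (1 - FreeAlgebra.ι k (0 : Fin 4) ^ (n - 1) * FreeAlgebra.ι k (1 : Fin 4))

/-- The algebra `ũ_q(sl₂)` as the quotient of the free algebra by the defining relations. -/
abbrev U (k : Type) [Field k] (n : ℕ) (q : k) := RingQuot (Rel k n q)

variable (k : Type) [Field k] (n : ℕ) (q : k)

def K : U k n q := RingQuot.mkAlgHom k (Rel k n q) (FreeAlgebra.ι k (0 : Fin 4))
def Kh : U k n q := RingQuot.mkAlgHom k (Rel k n q) (FreeAlgebra.ι k (1 : Fin 4))
def E : U k n q := RingQuot.mkAlgHom k (Rel k n q) (FreeAlgebra.ι k (2 : Fin 4))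
def F : U k n q := RingQuot.mkAlgHom k (Rel k n q) (FreeAlgebra.ι k (3 : Fin 4))

/-- `K⁻¹ = K^(n-1)`. -/
def Kinv : U k n q := K k n q ^ (n - 1)
/-- `K̂⁻¹ = K̂^(n²-1)`. -/
def Khinv : U k n q := Kh k n q ^ (n ^ 2 - 1)

/-- `φ_{2i} = (2/n²) Σ_{t<n²/2} q^{-2it} (K⁻¹K̂)^t`. -/
def phi (i : ℕ) : U k n q :=
  ((n ^ 2 : k)⁻¹ * 2) • ∑ t ∈ Finset.range (n ^ 2 / 2),
    (q⁻¹ ^ (2 * i * t)) • (Kinv k n q * Kh k n q) ^ t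

/-- `𝟙₀ = (1/2)(1 + KK̂^(n/2))` and `𝟙₁ = (1/2)(1 - KK̂^(n/2))`. -/
def oneJ (j : ℕ) : U k n q :=
  if j = 0 then (2 : k)⁻¹ • (1 + K k n q * Kh k n q ^ (n / 2))
  else (2 : k)⁻¹ • (1 - K k n q * Kh k n q ^ (n / 2))

/-- The idempotent `e_{2i,j} = φ_{2i} 𝟙_j`. -/
def eIdem (i j : ℕ) : U k n q := phi k n q i * oneJ k n q j

/-- `α_{2i,j} = F^(n²-1) e_{2i,j}`. -/
def alpha (i j : ℕ) : U k n q := F k n q ^ (n ^ 2 - 1) * eIdem k n q i j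

/-- `β_{2i,j} = E^(2i-2) α_{2i,j}`. -/
def beta (i j : ℕ) : U k n q := E k n q ^ (2 * i - 2) * alpha k n q i j

/-- The Gaussian number `s_q = 1 + q + ⋯ + q^(s-1)`. -/
def gauss (x : k) (s : ℕ) : k := ∑ t ∈ Finset.range s, x ^ t

/-- The span of the PBW-type monomials `F^a K^c K̂^d E^b` with `a ≤ n²-2`, `b ≤ n²-1`,
`c ≤ n-1`, `d ≤ n²-1`. -/
def pbw : Submodule k (U k n q) :=
  Submodule.span k {x | ∃ a b c d : ℕ, a ≤ n ^ 2 - 2 ∧ b ≤ n ^ 2 - 1 ∧ c ≤ n - 1 ∧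
    d ≤ n ^ 2 - 1 ∧ x = F k n q ^ a * K k n q ^ c * Kh k n q ^ d * E k n q ^ b}

/-- `γ_{2i,j}`: the unique element of the PBW span with `F·γ = β_{2i,j}`. -/
def gam (i j : ℕ) : U k n q :=
  @dite _ (∃! x, x ∈ pbw k n q ∧ F k n q * x = beta k n q i j)
    (Classical.propDecidable _) (fun h => h.choose) (fun _ => 0)

/-- The left ideal `P_{2i,j} = u·γ_{2i,j}`. -/
def P (i j : ℕ) : Submodule (U k n q) (U k n q) :=
  Submodule.span (U k n q) {gam k n q i j}

/-- `S_{2i,j} = Soc(P_{2i,j})`, the sum of all simple submodules of `P_{2i,j}`. -/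
def S (i j : ℕ) : Submodule (U k n q) (U k n q) :=
  sSup {N : Submodule (U k n q) (U k n q) | N ≤ P k n q i j ∧ IsSimpleModule (U k n q) N}

end QFL

/-!
The left ideal `P` generated by `γ` is spanned by the two strings `E^s γ` and `E^s α`: the vectors
`α` and `γ` are eigenvectors of `K⁻¹K̂` and of the involution `KK̂^(n/2)`, which together generate
the torus, `F` kills `α`, and `F γ = E^p α` with `p = 2i - 2`. As the strings have maximal length
`N = n²`, the kernel of `E` on `P` is spanned by their tops `E^(N-1) α` and `E^(N-1) γ`. Walking
down the strings with `F`, one finds that `F^(N-1)` kills the first top but carries the second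
one, through the link `F γ = E^p α`, to a nonzero multiple of `E^(p+1) α`. Hence every nonzero
submodule of `P` contains `E^(N-1) α`, which therefore generates the socle. An isomorphism of
socles preserves the line killed by `E` and by `F^(N-1)`, so it preserves the eigenvalues `q^(2i)`
and `(-1)^j` of the two torus elements on this line, and these determine `i` and `j`.

That `γ` is unique and inherits its weights from `β` needs `F` to be injective on the span of the
monomials with `a ≤ N - 2`, and the ladder argument needs `E^(N-1) α ≠ 0`. Both are read off from
modules induced from the torus, on which the monomials `F^a E^b` act freely.
-/

namespace QFL

section QCommute

variable {k R : Type*} [CommSemiring k] [Semiring R] [Algebra k R] {c c' : k} {x x' y : R}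

/-- `x` and `y` commute up to the scalar `c`. -/
def QCommute (c : k) (x y : R) : Prop := x * y = c • (y * x)

theorem QCommute.pow_right (h : QCommute c x y) : ∀ s : ℕ, QCommute (c ^ s) x (y ^ s)
  | 0 => by simp [QCommute]
  | s + 1 => by
    have ih : x * y ^ s = c ^ s • (y ^ s * x) := h.pow_right s
    calc x * y ^ (s + 1) = x * y ^ s * y := by rw [pow_succ, mul_assoc]
      _ = c ^ s • (y ^ s * (x * y)) := by rw [ih, smul_mul_assoc, mul_assoc]
      _ = c ^ (s + 1) • (y ^ (s + 1) * x) := by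
        rw [h, mul_smul_comm, smul_smul, ← mul_assoc, ← pow_succ, ← pow_succ]

theorem QCommute.mul_left (h : QCommute c x y) (h' : QCommute c' x' y) :
    QCommute (c * c') (x * x') y :=
  calc x * x' * y = c' • (x * y * x') := by rw [mul_assoc, h', mul_smul_comm, mul_assoc]
    _ = (c * c') • (y * (x * x')) := by
      rw [h, smul_mul_assoc, smul_smul, mul_assoc, mul_comm c']

theorem QCommute.pow_left (h : QCommute c x y) : ∀ s : ℕ, QCommute (c ^ s) (x ^ s) y
  | 0 => by simp [QCommute]
  | s + 1 => by simpa only [pow_succ] using (h.pow_left s).mul_left h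

theorem QCommute.mul_pow_mul_pow_mul {y' : R} (h : QCommute c x y) (h' : QCommute c' x y')
    (a b : ℕ) (t : R) :
    x * (y' ^ a * y ^ b * t) = (c' ^ a * c ^ b) • (y' ^ a * y ^ b * (x * t)) := by
  have hy : x * y ^ b = c ^ b • (y ^ b * x) := h.pow_right b
  have hy' : x * y' ^ a = c' ^ a • (y' ^ a * x) := h'.pow_right a
  rw [← mul_assoc, ← mul_assoc, hy', smul_mul_assoc, mul_assoc _ x, hy, mul_smul_comm, smul_smul,
    smul_mul_assoc, ← mul_assoc, mul_assoc _ x t]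

theorem qCommute_of_conj {m : ℕ} (hm : m ≠ 0) (hx : x ^ m = 1)
    (h : x * y * x ^ (m - 1) = c • y) : QCommute c x y :=
  calc x * y = x * y * x ^ (m - 1) * x := by
        rw [mul_assoc _ _ x, ← pow_succ, Nat.sub_one_add_one hm, hx, mul_one]
    _ = c • (y * x) := by rw [h, smul_mul_assoc]

theorem QCommute.conj_eq_smul {m : ℕ} (hm : m ≠ 0) (hx : x ^ m = 1) (h : QCommute c x y) :
    x * y * x ^ (m - 1) = c • y := by
  rw [h, smul_mul_assoc, mul_assoc, ← pow_succ', Nat.sub_one_add_one hm, hx, mul_one]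

variable {M : Type*} [AddCommMonoid M] [Module k M] [Module R M] [IsScalarTower k R M]

theorem QCommute.smul_pow_smul {d : k} {v : M} (h : QCommute c x y) (hv : x • v = d • v) (s : ℕ) :
    x • y ^ s • v = (c ^ s * d) • y ^ s • v := by
  have : x * y ^ s = c ^ s • (y ^ s * x) := h.pow_right s
  rw [smul_smul, this, smul_assoc, mul_smul, hv, ← algebraMap_smul R d v, smul_smul,
    ← Algebra.commutes, mul_smul, algebraMap_smul, smul_smul]

end QCommute

theorem QCommute.symm {k R : Type*} [Field k] [Semiring R] [Algebra k R] {c : k} {x y : R}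
    (hc : c ≠ 0) (h : QCommute c x y) : QCommute c⁻¹ y x := by
  rw [QCommute, h, inv_smul_smul₀ hc]

section Gauss

variable {k : Type} [Field k]

theorem gauss_succ (x : k) (s : ℕ) : gauss k x (s + 1) = gauss k x s + x ^ s :=
  Finset.sum_range_succ _ _

theorem gauss_succ' (x : k) (s : ℕ) : gauss k x (s + 1) = x * gauss k x s + 1 :=
  geom_sum_succ

theorem gauss_ne_zero {x : k} {N s : ℕ} (hx : IsPrimitiveRoot x N) (hs : s ≠ 0) (hsN : s < N) :
    gauss k x s ≠ 0 := fun h ↦ hx.pow_ne_one_of_pos_of_lt hs hsN <| by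
  rw [← sub_eq_zero, ← geom_sum_mul, ← gauss, h, zero_mul]

theorem mul_pow_succ_of_qCommutator {R : Type*} [Ring R] [Algebra k R] {c d : k} {X Y L : R}
    (hXY : X * Y = c • (Y * X) + d • (1 - L)) (hLY : QCommute (c ^ 2) L Y) (s : ℕ) :
    X * Y ^ (s + 1) =
      c ^ (s + 1) • (Y ^ (s + 1) * X) + (d * gauss k c (s + 1)) • (Y ^ s * (1 - c ^ s • L)) := by
  induction s with
  | zero => simp [hXY, gauss]
  | succ s ih =>
    have hLY : L * Y = c ^ 2 • (Y * L) := hLY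
    calc X * Y ^ (s + 2)
        = c ^ (s + 1) • (Y ^ (s + 1) * (X * Y)) +
            (d * gauss k c (s + 1)) • (Y ^ s * (Y - c ^ s • (L * Y))) := by
          rw [pow_succ _ (s + 1), ← mul_assoc, ih]
          simp only [add_mul, smul_mul_assoc, mul_assoc, sub_mul, one_mul]
      _ = c ^ (s + 2) • (Y ^ (s + 2) * X) + (d * (c ^ (s + 1) + gauss k c (s + 1))) • Y ^ (s + 1)
            - (d * c ^ (s + 1) * (c * gauss k c (s + 1) + 1)) • (Y ^ (s + 1) * L) := by
          rw [hXY, hLY]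
          simp only [mul_add, mul_sub, mul_smul_comm, ← mul_assoc, ← pow_succ, mul_one]
          module
      _ = _ := by
          rw [← gauss_succ', add_comm (c ^ (s + 1)), ← gauss_succ]
          simp only [mul_sub, mul_smul_comm, mul_one]
          module

theorem smul_pow_succ_smul_of_qCommutator {R M : Type*} [Ring R] [Algebra k R] [AddCommGroup M]
    [Module k M] [Module R M] [IsScalarTower k R M] {c d l : k} {X Y L : R} {v : M}
    (hXY : X * Y = c • (Y * X) + d • (1 - L)) (hLY : QCommute (c ^ 2) L Y) (hv : L • v = l • v)
    (s : ℕ) :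
    X • Y ^ (s + 1) • v = c ^ (s + 1) • Y ^ (s + 1) • X • v +
      (d * gauss k c (s + 1) * (1 - c ^ s * l)) • Y ^ s • v := by
  have hY : (Y ^ s * (1 - c ^ s • L)) • v = (1 - c ^ s * l) • Y ^ s • v := by
    rw [mul_smul, sub_smul, one_smul, smul_assoc, hv, smul_smul, sub_smul, one_smul, smul_sub,
      smul_algebra_smul_comm]
  rw [smul_smul, mul_pow_succ_of_qCommutator hXY hLY, add_smul, smul_assoc, smul_assoc, hY,
    mul_smul, smul_smul _ (1 - _)]

theorem commute_pow_of_qCommutator {R : Type*} [Ring R] [Algebra k R] {c d : k} {X Y L : R} {N : ℕ}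
    (hc : IsPrimitiveRoot c N) (hN : 1 < N) (hXY : X * Y = c • (Y * X) + d • (1 - L))
    (hLY : QCommute (c ^ 2) L Y) : Commute X (Y ^ N) := by
  have h := mul_pow_succ_of_qCommutator hXY hLY (N - 1)
  rwa [Nat.sub_add_cancel hN.le, hc.pow_eq_one, gauss, hc.geom_sum_eq_zero hN, mul_zero, zero_smul,
    add_zero, one_smul] at h

end Gauss

section Modules

theorem mem_map_pow_of_mem_iSup_map_pow {k M : Type*} [Ring k] [AddCommGroup M] [Module k M]
    {f : Module.End k M} {N : ℕ} (hf : f ^ (N + 1) = 0) {W : Submodule k M}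
    (hW : ∀ x ∈ W, (f ^ N) x = 0 → x = 0) {y : M} (hy : y ∈ ⨆ s, W.map (f ^ s)) (hfy : f y = 0) :
    y ∈ W.map (f ^ N) := by
  have pow_eq_zero {s : ℕ} (hs : N + 1 ≤ s) : f ^ s = 0 := pow_eq_zero_of_le hs hf
  have tail_succ (s : ℕ) :
      ⨆ t, W.map (f ^ (s + t)) = W.map (f ^ s) ⊔ ⨆ t, W.map (f ^ (s + 1 + t)) := by
    rw [← sup_iSup_nat_succ fun t ↦ W.map (f ^ (s + t))]
    simp only [add_zero, add_assoc, add_comm 1]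
  have mem_tail : ∀ s ≤ N, y ∈ ⨆ t, W.map (f ^ (s + t)) := by
    intro s hs
    induction s with
    | zero => simpa only [zero_add] using hy
    | succ s ih =>
      obtain ⟨_, ⟨x, hx, rfl⟩, z, hz, rfl⟩ := Submodule.mem_sup.mp (tail_succ s ▸ ih (by omega))
      have hz0 : (f ^ (N - s)) z = 0 := by
        have hker : ⨆ t, W.map (f ^ (s + 1 + t)) ≤ LinearMap.ker (f ^ (N - s)) :=
          iSup_le fun t ↦ by
            rintro _ ⟨x, -, rfl⟩
            rw [LinearMap.mem_ker, ← Module.End.mul_apply, ← pow_add, pow_eq_zero (by omega),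
              LinearMap.zero_apply]
        exact hker hz
      have hy0 : (f ^ (N - s)) ((f ^ s) x + z) = 0 := by
        rw [← Nat.sub_one_add_one (by omega : N - s ≠ 0), pow_succ, Module.End.mul_apply, hfy,
          map_zero]
      have hx0 : x = 0 := hW x hx <| by
        rwa [map_add, hz0, add_zero, ← Module.End.mul_apply, ← pow_add,
          Nat.sub_add_cancel (by omega)] at hy0
      rwa [hx0, map_zero, zero_add]
  have htail : ⨆ t, W.map (f ^ (N + 1 + t)) = ⊥ :=
    iSup_eq_bot.mpr fun t ↦ by rw [pow_eq_zero (by omega), Submodule.map_zero]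
  have hyN := mem_tail N le_rfl
  rwa [tail_succ, htail, sup_bot_eq] at hyN

variable {R M : Type*} [Ring R] [AddCommGroup M] [Module R M]

theorem exists_mem_ne_zero_smul_eq_zero_of_isNilpotent {e : R} (he : IsNilpotent e)
    {X : Submodule R M} (hX : X ≠ ⊥) : ∃ y ∈ X, y ≠ 0 ∧ e • y = 0 := by
  classical
  obtain ⟨x, hxX, hx⟩ := X.ne_bot_iff.mp hX
  have hex : ∃ s, e ^ s • x = 0 := he.imp fun s hs ↦ by rw [hs, zero_smul]
  obtain ⟨s, hs⟩ := Nat.exists_eq_add_one_of_ne_zero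
    (fun h ↦ hx <| by simpa [h] using Nat.find_spec hex : Nat.find hex ≠ 0)
  refine ⟨e ^ s • x, X.smul_mem _ hxX, Nat.find_min hex (hs ▸ s.lt_add_one), ?_⟩
  rw [smul_smul, ← pow_succ', ← hs]
  exact Nat.find_spec hex

theorem sSup_simple_eq_span_singleton {P : Submodule R M} {v : M} (hv : v ≠ 0) (hvP : v ∈ P)
    (h : ∀ X ≤ P, X ≠ ⊥ → v ∈ X) :
    sSup {X : Submodule R M | X ≤ P ∧ IsSimpleModule R X} = Submodule.span R {v} := by
  have span_le {X : Submodule R M} (hX : v ∈ X) : Submodule.span R {v} ≤ X := by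
    rwa [Submodule.span_singleton_le_iff_mem]
  refine le_antisymm (sSup_le fun X ⟨hXP, hX⟩ ↦ ?_) (le_sSup ⟨span_le hvP, ?_⟩)
  · rw [isSimpleModule_iff_isAtom] at hX
    exact (hX.le_iff_eq (by simpa using hv)).mp (span_le (h X hXP hX.1)) |>.ge
  · rw [isSimpleModule_iff_isAtom]
    refine ⟨by simpa using hv, fun X hX ↦ by_contra fun hX0 ↦ hX.not_ge (span_le ?_)⟩
    exact h X (hX.le.trans (span_le hvP)) hX0

theorem exists_pow_smul_eq_smul {k : Type*} [Field k] [Algebra k R] [Module k M]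
    [IsScalarTower k R M] {f : R} {x : ℕ → M} {lo r : ℕ}
    (h : ∀ s, lo ≤ s → s < lo + r → ∃ c : k, c ≠ 0 ∧ f • x (s + 1) = c • x s) :
    ∃ c : k, c ≠ 0 ∧ f ^ r • x (lo + r) = c • x lo := by
  induction r with
  | zero => exact ⟨1, one_ne_zero, by simp⟩
  | succ r ih =>
    obtain ⟨c, hc, hx⟩ := h (lo + r) (by omega) (by omega)
    obtain ⟨c', hc', hx'⟩ := ih fun s hs hs' ↦ h s hs (by omega)
    refine ⟨c * c', mul_ne_zero hc hc', ?_⟩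
    rw [pow_succ, mul_smul, ← add_assoc, hx, smul_algebra_smul_comm, hx', smul_smul]

end Modules

section Torus

/-- The relations between `K` and `K̂`, for elements `x` and `y` of an arbitrary monoid. -/
structure IsTorusPair {G : Type*} [Monoid G] (n : ℕ) (x y : G) : Prop where
  pow_fst : x ^ n = 1
  pow_snd : y ^ n = (x ^ (n - 1)) ^ 2

namespace IsTorusPair

theorem snd_pow_sq {G : Type*} [Monoid G] {n : ℕ} {x y : G} (h : IsTorusPair n x y) :
    y ^ n ^ 2 = 1 := by
  rw [pow_two, pow_mul, h.pow_snd, pow_right_comm _ 2 n, pow_right_comm _ _ n, h.pow_fst, one_pow,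
    one_pow]

variable {G : Type*} [CommMonoid G] {n : ℕ} {x y l z : G}

theorem snd_eq_mul (hn : 0 < n) (h : IsTorusPair n x y) : y = x * (x ^ (n - 1) * y) := by
  rw [← mul_assoc, ← pow_succ', Nat.sub_one_add_one hn.ne', h.pow_fst, one_mul]

theorem pow_mul_snd_pow (h : IsTorusPair n x y) : (x ^ (n - 1) * y) ^ n = (x ^ (n - 1)) ^ 2 := by
  rw [mul_pow, h.pow_snd, pow_right_comm x, h.pow_fst, one_pow, one_mul]

theorem pow_mul_snd_pow_half (h4 : 4 ∣ n) (h : IsTorusPair n x y) :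
    (x ^ (n - 1) * y) ^ (n ^ 2 / 2) = 1 := by
  obtain ⟨m, rfl⟩ := h4
  have hexp : (4 * m) ^ 2 / 2 = 4 * m * (2 * m) :=
    Nat.div_eq_of_eq_mul_left two_pos (by ring)
  rw [hexp, pow_mul, h.pow_mul_snd_pow, ← pow_mul, ← pow_mul, mul_comm (4 * m - 1), pow_mul,
    (by ring : 2 * (2 * m) = 4 * m), h.pow_fst, one_pow]

theorem mul_snd_pow_half_sq (hn : 0 < n) (h2 : 2 ∣ n) (h : IsTorusPair n x y) :
    (x * y ^ (n / 2)) ^ 2 = 1 := by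
  rw [mul_pow, ← pow_mul, Nat.div_mul_cancel h2, h.pow_snd, ← mul_pow, ← pow_succ',
    Nat.sub_one_add_one hn.ne', h.pow_fst, one_pow]

theorem fst_eq_mul_pow (hn : 0 < n) (h4 : 4 ∣ n) {r : ℕ} (hr : r + n / 2 = n * n / 4)
    (h : IsTorusPair n x y) : x = x * y ^ (n / 2) * (x ^ (n - 1) * y) ^ r := by
  obtain ⟨m, rfl⟩ := h4
  rw [(by omega : 4 * m / 2 = 2 * m), mul_assoc 4 m, Nat.mul_div_cancel_left _ four_pos] at hr
  rw [(by omega : 4 * m / 2 = 2 * m)]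
  calc x = x * (x ^ (4 * m)) ^ (2 * m) := by rw [h.pow_fst, one_pow, mul_one]
    _ = x * (x ^ (2 * m) * (x ^ (4 * m - 1)) ^ (2 * m)) := by
      rw [← mul_pow, ← pow_succ', Nat.sub_one_add_one hn.ne']
    _ = x * (x ^ (2 * m) * (x ^ (4 * m - 1) * y) ^ (2 * m + r)) := by
      rw [add_comm, hr, mul_comm m, pow_mul _ (4 * m), h.pow_mul_snd_pow, ← pow_mul _ 2]
    _ = x * (x * (x ^ (4 * m - 1) * y)) ^ (2 * m) * (x ^ (4 * m - 1) * y) ^ r := by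
      rw [pow_add, ← mul_assoc (x ^ (2 * m)), ← mul_pow, mul_assoc]
    _ = _ := by rw [← h.snd_eq_mul hn]

theorem exists_of_pow_eq_one (hn : 0 < n) (h4 : 4 ∣ n) (hl : l ^ (n ^ 2 / 2) = 1) (hz : z ^ 2 = 1) :
    ∃ x y, IsTorusPair n x y ∧ x ^ (n - 1) * y = l ∧ x * y ^ (n / 2) = z := by
  obtain ⟨m, rfl⟩ := h4
  obtain ⟨r, hr⟩ : ∃ r, r + 2 * m = 4 * m * m :=
    ⟨4 * m * m - 2 * m, Nat.sub_add_cancel (by nlinarith)⟩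
  rw [Nat.div_eq_of_eq_mul_left (k := 8 * m ^ 2) two_pos (by ring)] at hl
  have l_pow {a b c : ℕ} (h : a + 8 * m ^ 2 * b = 8 * m ^ 2 * c) : l ^ a = 1 :=
    calc l ^ a = l ^ a * (l ^ (8 * m ^ 2)) ^ b := by rw [hl, one_pow, mul_one]
      _ = 1 := by rw [← pow_mul, ← pow_add, h, pow_mul, hl, one_pow]
  have z_pow (a : ℕ) : z ^ (2 * a) = 1 := by rw [pow_mul, hz, one_pow]
  have hx : (z * l ^ r) ^ (4 * m) = 1 := by
    rw [mul_pow, ← pow_mul, l_pow (b := 1) (c := 2 * m) (by linear_combination 4 * m * hr),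
      (by ring : 4 * m = 2 * (2 * m)), z_pow, mul_one]
  have hxl : (z * l ^ r) ^ 2 * l ^ (4 * m) = 1 := by
    rw [mul_pow, hz, one_mul, ← pow_mul, ← pow_add]
    exact l_pow (b := 0) (c := 1) (by linear_combination 2 * hr)
  refine ⟨z * l ^ r, z * l ^ r * l, ⟨hx, ?_⟩, ?_, ?_⟩
  · rw [mul_pow, hx, one_mul, ← mul_one (_ ^ 2), ← hxl, ← mul_assoc, ← mul_pow, ← pow_succ,
      Nat.sub_one_add_one hn.ne', hx, one_pow, one_mul]
  · rw [← mul_assoc, ← pow_succ, Nat.sub_one_add_one hn.ne', hx, one_mul]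
  · rw [(by omega : 4 * m / 2 = 2 * m), mul_assoc z (l ^ r) l, ← pow_succ, mul_pow, z_pow, one_mul,
      mul_assoc, ← pow_mul, ← pow_add, l_pow (b := 0) (c := m), mul_one]
    linear_combination (2 * m + 1) * hr

end IsTorusPair

end Torus

section Relations

/-- The relations of `U k n q` for elements `K, Kh, E, F` of an arbitrary algebra, with the
conjugation relations rewritten as commutation up to a scalar. -/
structure Relations {k R : Type*} [Field k] [Ring R] [Algebra k R] (n : ℕ) (q : k)
    (K Kh E F : R) : Prop where
  isTorusPair : IsTorusPair n K Kh
  commute : Commute K Kh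
  qCommute_K_E : QCommute (q ^ n) K E
  qCommute_K_F : QCommute (q ^ n)⁻¹ K F
  qCommute_Kh_E : QCommute (q ^ n * (q ^ 2)⁻¹) Kh E
  qCommute_Kh_F : QCommute ((q ^ n)⁻¹ * q ^ 2) Kh F
  E_pow : E ^ n ^ 2 = 0
  F_pow : F ^ n ^ 2 = 0
  F_mul_E : F * E = q⁻¹ • (E * F) + (1 - K ^ (n - 1) * Kh)

theorem relations_generators (k : Type) [Field k] {n : ℕ} (hn : 0 < n) (q : k) :
    Relations n q (K k n q) (Kh k n q) (E k n q) (F k n q) := by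
  have rel {x y} (h : Rel k n q x y) := RingQuot.mkAlgHom_rel k h
  have hK : K k n q ^ n = 1 := by simpa only [map_pow, map_one, K] using rel .Kord
  have hKh : Kh k n q ^ n = (K k n q ^ (n - 1)) ^ 2 := by
    simpa only [map_pow, K, Kh] using rel .Khord
  have hKKh : IsTorusPair n (K k n q) (Kh k n q) := ⟨hK, hKh⟩
  have hn2 : n ^ 2 ≠ 0 := by positivity
  refine ⟨hKKh, ?_, qCommute_of_conj hn.ne' hK ?_, qCommute_of_conj hn.ne' hK ?_,
    qCommute_of_conj hn2 hKKh.snd_pow_sq ?_, qCommute_of_conj hn2 hKKh.snd_pow_sq ?_, ?_, ?_, ?_⟩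
  · simpa only [map_mul, K, Kh, Commute, SemiconjBy] using rel .KKh
  · simpa only [map_mul, map_pow, map_smul, K, E] using rel .KE
  · simpa only [map_mul, map_pow, map_smul, K, F] using rel .KF
  · simpa only [map_mul, map_pow, map_smul, Kh, E] using rel .KhE
  · simpa only [map_mul, map_pow, map_smul, Kh, F] using rel .KhF
  · simpa only [map_pow, map_zero, E] using rel .Enil
  · simpa only [map_pow, map_zero, F] using rel .Fnil
  · rw [← sub_eq_iff_eq_add']
    simpa only [map_mul, map_pow, map_smul, map_sub, map_one, K, Kh, E, F] using rel .EF

theorem Relations.exists_algHom {k : Type} {R : Type*} [Field k] [Ring R] [Algebra k R] {n : ℕ}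
    (hn : 0 < n) {q : k} {x₀ x₁ x₂ x₃ : R} (h : Relations n q x₀ x₁ x₂ x₃) :
    ∃ ρ : U k n q →ₐ[k] R,
      ρ (K k n q) = x₀ ∧ ρ (Kh k n q) = x₁ ∧ ρ (E k n q) = x₂ ∧ ρ (F k n q) = x₃ := by
  have hn2 : n ^ 2 ≠ 0 := by positivity
  let φ : FreeAlgebra k (Fin 4) →ₐ[k] R := FreeAlgebra.lift k ![x₀, x₁, x₂, x₃]
  have hφ : ∀ i, φ (FreeAlgebra.ι k i) = ![x₀, x₁, x₂, x₃] i := FreeAlgebra.lift_ι_apply _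
  have hrel ⦃x y⦄ (hxy : Rel k n q x y) : φ x = φ y := by
    induction hxy <;>
      simp only [map_mul, map_pow, map_smul, map_sub, map_one, map_zero, hφ, Matrix.cons_val]
    case Kord => exact h.isTorusPair.pow_fst
    case Khord => exact h.isTorusPair.pow_snd
    case KKh => exact h.commute
    case KE => exact h.qCommute_K_E.conj_eq_smul hn.ne' h.isTorusPair.pow_fst
    case KF => exact h.qCommute_K_F.conj_eq_smul hn.ne' h.isTorusPair.pow_fst
    case KhE => exact h.qCommute_Kh_E.conj_eq_smul hn2 h.isTorusPair.snd_pow_sq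
    case KhF => exact h.qCommute_Kh_F.conj_eq_smul hn2 h.isTorusPair.snd_pow_sq
    case Enil => exact h.E_pow
    case Fnil => exact h.F_pow
    case EF => exact sub_eq_iff_eq_add'.mpr h.F_mul_E
  refine ⟨RingQuot.liftAlgHom k ⟨φ, hrel⟩, ?_, ?_, ?_, ?_⟩ <;>
    simp only [K, Kh, E, F, RingQuot.liftAlgHom_mkAlgHom_apply, hφ, Matrix.cons_val]

end Relations

variable {k : Type} [Field k] {n : ℕ} {q : k}

/-- `K⁻¹K̂`, whose eigenvalue on `e_{2i,j}` is `q^(2i)`. -/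
def L (k : Type) [Field k] (n : ℕ) (q : k) : U k n q := Kinv k n q * Kh k n q

/-- The involution `KK̂^(n/2)`, whose eigenvalue on `e_{2i,j}` is `(-1)^j`. -/
def Z (k : Type) [Field k] (n : ℕ) (q : k) : U k n q := K k n q * Kh k n q ^ (n / 2)

local notation "Kᵤ" => K k n q
local notation "Khᵤ" => Kh k n q
local notation "Eᵤ" => E k n q
local notation "Fᵤ" => F k n q
local notation "Lᵤ" => L k n q
local notation "Zᵤ" => Z k n q

theorem F_mul_E (hn : 0 < n) : Fᵤ * Eᵤ = q⁻¹ • (Eᵤ * Fᵤ) + (1 : k) • (1 - Lᵤ) := by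
  rw [one_smul]
  exact (relations_generators k hn q).F_mul_E

theorem E_mul_F (hn : 0 < n) (hq : q ≠ 0) :
    Eᵤ * Fᵤ = q • (Fᵤ * Eᵤ) + (-q) • (1 - Lᵤ) := by
  rw [F_mul_E hn, smul_add, smul_inv_smul₀ hq, one_smul]
  module

theorem pow_pow_eq_one (hq : IsPrimitiveRoot q (n ^ 2)) : (q ^ n) ^ n = 1 := by
  rw [← pow_mul, ← pow_two, hq.pow_eq_one]

theorem pow_pow_sub_one (hn : 0 < n) (hq : IsPrimitiveRoot q (n ^ 2)) :
    (q ^ n) ^ (n - 1) = (q ^ n)⁻¹ :=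
  eq_inv_of_mul_eq_one_left <| by rw [← pow_succ, Nat.sub_one_add_one hn.ne', pow_pow_eq_one hq]

theorem qCommute_L_E (hn : 0 < n) (hq : IsPrimitiveRoot q (n ^ 2)) : QCommute (q⁻¹ ^ 2) Lᵤ Eᵤ := by
  have hq0 : q ≠ 0 := hq.ne_zero (by positivity)
  have h := relations_generators k hn q
  have hc : (q ^ n) ^ (n - 1) * (q ^ n * (q ^ 2)⁻¹) = q⁻¹ ^ 2 := by
    rw [pow_pow_sub_one hn hq, inv_mul_cancel_left₀ (pow_ne_zero n hq0), inv_pow]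
  exact hc ▸ (h.qCommute_K_E.pow_left (n - 1)).mul_left h.qCommute_Kh_E

theorem qCommute_L_F (hn : 0 < n) (hq : IsPrimitiveRoot q (n ^ 2)) : QCommute (q ^ 2) Lᵤ Fᵤ := by
  have hq0 : q ≠ 0 := hq.ne_zero (by positivity)
  have h := relations_generators k hn q
  have hc : (q ^ n)⁻¹ ^ (n - 1) * ((q ^ n)⁻¹ * q ^ 2) = q ^ 2 := by
    rw [inv_pow, pow_pow_sub_one hn hq, inv_inv, mul_inv_cancel_left₀ (pow_ne_zero n hq0)]
  exact hc ▸ (h.qCommute_K_F.pow_left (n - 1)).mul_left h.qCommute_Kh_F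

theorem pow_sq_half_eq_neg_one (hn : 0 < n) (h4 : 4 ∣ n) (hq : IsPrimitiveRoot q (n ^ 2)) :
    q ^ (n ^ 2 / 2) = -1 := by
  have hpos : 0 < n ^ 2 := by positivity
  refine (hq.pow hpos (Nat.div_mul_cancel ?_).symm).eq_neg_one_of_two_right
  exact (by norm_num : 2 ∣ 4).trans (dvd_pow h4 two_ne_zero)

theorem Z_weight_eq_neg_one (hn : 0 < n) (h4 : 4 ∣ n) (hq : IsPrimitiveRoot q (n ^ 2)) :
    q ^ n * (q ^ n * (q ^ 2)⁻¹) ^ (n / 2) = -1 := by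
  have hq0 : q ^ n ≠ 0 := pow_ne_zero n (hq.ne_zero (by positivity))
  have hn2 : 2 * (n / 2) = n := Nat.mul_div_cancel' ((by norm_num : 2 ∣ 4).trans h4)
  have hhalf : n ^ 2 / 2 = n * (n / 2) := by
    rw [pow_two, Nat.mul_div_assoc _ ((by norm_num : 2 ∣ 4).trans h4)]
  rw [mul_pow, inv_pow, ← pow_mul, ← hhalf, pow_sq_half_eq_neg_one hn h4 hq, ← pow_mul, hn2,
    mul_left_comm, mul_inv_cancel₀ hq0, mul_one]

theorem qCommute_Z_E (hn : 0 < n) (h4 : 4 ∣ n) (hq : IsPrimitiveRoot q (n ^ 2)) :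
    QCommute (-1 : k) Zᵤ Eᵤ := by
  have h := relations_generators k hn q
  exact Z_weight_eq_neg_one hn h4 hq ▸ h.qCommute_K_E.mul_left (h.qCommute_Kh_E.pow_left (n / 2))

theorem qCommute_Z_F (hn : 0 < n) (h4 : 4 ∣ n) (hq : IsPrimitiveRoot q (n ^ 2)) :
    QCommute (-1 : k) Zᵤ Fᵤ := by
  have h := relations_generators k hn q
  have hc : (q ^ n)⁻¹ * ((q ^ n)⁻¹ * q ^ 2) ^ (n / 2) = -1 := by
    rw [← inv_inj, mul_inv, inv_inv, ← inv_pow, mul_inv, inv_inv, Z_weight_eq_neg_one hn h4 hq,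
      inv_neg_one]
  exact hc ▸ h.qCommute_K_F.mul_left (h.qCommute_Kh_F.pow_left (n / 2))

variable (k n q) in
/-- The commutative subalgebra generated by `K` and `K̂`. -/
def torus : Subalgebra k (U k n q) := Algebra.adjoin k {K k n q, Kh k n q}

variable (k n q) in
/-- The element `K` of the torus. -/
def torusK : torus k n q := ⟨K k n q, Algebra.subset_adjoin (Set.mem_insert _ _)⟩

variable (k n q) in
/-- The element `K̂` of the torus. -/
def torusKh : torus k n q := ⟨Kh k n q, Algebra.subset_adjoin (Set.mem_insert_of_mem _ rfl)⟩

theorem isMulCommutative_torus (hn : 0 < n) : IsMulCommutative (torus k n q) := by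
  have h : Commute Kᵤ Khᵤ := (relations_generators k hn q).commute
  refine Algebra.isMulCommutative_adjoin k ?_
  rintro x (rfl | rfl) y (rfl | rfl)
  exacts [rfl, h, h.symm, rfl]

open scoped IsMulCommutative

theorem isTorusPair_torus (hn : 0 < n) : IsTorusPair n (torusK k n q) (torusKh k n q) where
  pow_fst := Subtype.ext (relations_generators k hn q).isTorusPair.pow_fst
  pow_snd := Subtype.ext (relations_generators k hn q).isTorusPair.pow_snd

theorem L_pow_half (hn : 0 < n) (h4 : 4 ∣ n) : Lᵤ ^ (n ^ 2 / 2) = 1 := by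
  have := isMulCommutative_torus (k := k) (q := q) hn
  have h : IsTorusPair n (torusK k n q) (torusKh k n q) := isTorusPair_torus hn
  exact congrArg (Subtype.val : torus k n q → U k n q) (h.pow_mul_snd_pow_half h4)

theorem Z_sq (hn : 0 < n) (h2 : 2 ∣ n) : Zᵤ ^ 2 = 1 := by
  have := isMulCommutative_torus (k := k) (q := q) hn
  have h : IsTorusPair n (torusK k n q) (torusKh k n q) := isTorusPair_torus hn
  exact congrArg (Subtype.val : torus k n q → U k n q) (h.mul_snd_pow_half_sq hn h2)

theorem commute_L_Z (hn : 0 < n) : Commute Lᵤ Zᵤ := by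
  have := isMulCommutative_torus (k := k) (q := q) hn
  exact congrArg (Subtype.val : torus k n q → U k n q)
    (mul_comm (torusK k n q ^ (n - 1) * torusKh k n q) (torusK k n q * torusKh k n q ^ (n / 2)))

theorem Kh_eq_K_mul_L (hn : 0 < n) : Khᵤ = Kᵤ * Lᵤ := by
  have := isMulCommutative_torus (k := k) (q := q) hn
  have h : IsTorusPair n (torusK k n q) (torusKh k n q) := isTorusPair_torus hn
  exact congrArg (Subtype.val : torus k n q → U k n q) (h.snd_eq_mul hn)

theorem exists_K_eq_Z_mul_L_pow (hn : 0 < n) (h4 : 4 ∣ n) : ∃ r, Kᵤ = Zᵤ * Lᵤ ^ r := by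
  have := isMulCommutative_torus (k := k) (q := q) hn
  have h : IsTorusPair n (torusK k n q) (torusKh k n q) := isTorusPair_torus hn
  obtain ⟨r, hr⟩ : ∃ r, r + n / 2 = n * n / 4 := by
    refine ⟨n * n / 4 - n / 2, Nat.sub_add_cancel ?_⟩
    rw [Nat.mul_div_assoc n h4, Nat.div_le_iff_le_mul_add_pred two_pos]
    nlinarith [Nat.div_mul_cancel h4]
  exact ⟨r, congrArg (Subtype.val : torus k n q → U k n q) (h.fst_eq_mul_pow hn h4 hr)⟩

theorem smul_mem_of_generators {M : Type*} [AddCommGroup M] [Module k M] [Module (U k n q) M]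
    [IsScalarTower k (U k n q) M] {T : Submodule k M} (hK : ∀ x ∈ T, Kᵤ • x ∈ T)
    (hKh : ∀ x ∈ T, Khᵤ • x ∈ T) (hE : ∀ x ∈ T, Eᵤ • x ∈ T) (hF : ∀ x ∈ T, Fᵤ • x ∈ T)
    (u : U k n q) {x : M} (hx : x ∈ T) : u • x ∈ T := by
  obtain ⟨y, rfl⟩ := RingQuot.mkAlgHom_surjective k (Rel k n q) u
  induction y using FreeAlgebra.induction generalizing x with
  | grade0 c =>
    rw [AlgHom.commutes, algebraMap_smul]
    exact T.smul_mem c hx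
  | grade1 i =>
    fin_cases i
    exacts [hK x hx, hKh x hx, hE x hx, hF x hx]
  | mul a b ha hb =>
    rw [map_mul, mul_smul]
    exact ha (hb hx)
  | add a b ha hb =>
    rw [map_add, add_smul]
    exact T.add_mem (ha hx) (hb hx)

/-- The module `U ⊗_T A` induced from a commutative quotient `A` of the subalgebra `T` generated by
`K` and `K̂`: it is free over `A` on the elements `F^a E^b ⊗ 1` with `a, b < N`. -/
abbrev Induced (A : Type*) [CommRing A] (N : ℕ) := (Fin N × Fin N) →₀ A

namespace Induced

variable {A : Type*} [CommRing A] [Algebra k A] {N : ℕ}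

variable (A N) in
/-- The vector `F^a E^b ⊗ 1`, which is zero when `a` or `b` is at least `N`. -/
def vec (a b : ℕ) : Induced A N :=
  if h : a < N ∧ b < N then Finsupp.single (⟨a, h.1⟩, ⟨b, h.2⟩) 1 else 0

theorem vec_of_lt {a b : ℕ} (ha : a < N) (hb : b < N) :
    vec A N a b = Finsupp.single (⟨a, ha⟩, ⟨b, hb⟩) 1 := dif_pos ⟨ha, hb⟩

theorem vec_of_le {a b : ℕ} (h : N ≤ a ∨ N ≤ b) : vec A N a b = 0 := dif_neg (by omega)

theorem hom_ext {M : Type*} [AddCommGroup M] [Module A M] {f g : Induced A N →ₗ[A] M}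
    (h : ∀ a b, a < N → b < N → f (vec A N a b) = g (vec A N a b)) : f = g := by
  refine Finsupp.lhom_ext' fun p ↦ LinearMap.ext_ring ?_
  simpa only [vec_of_lt p.1.2 p.2.2, LinearMap.comp_apply, Finsupp.lsingle_apply]
    using h p.1 p.2 p.1.2 p.2.2

/-- The coefficient of `F^(a-1) E^b ⊗ 1` in `E • (F^a E^b ⊗ 1)`, where `l` is the image of
`K⁻¹K̂`. -/
def coeffE (q : k) (l : A) (a b : ℕ) : A :=
  gauss k q a • ((q ^ a * q⁻¹ ^ (2 * b)) • l - q • 1)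

variable (A N) in
/-- The action of `F`. -/
def actF : Module.End A (Induced A N) :=
  Finsupp.linearCombination A fun p ↦ vec A N (p.1 + 1) p.2

variable (N) in
/-- The action of `E`, where `l` is the image of `K⁻¹K̂`. -/
def actE (q : k) (l : A) : Module.End A (Induced A N) :=
  Finsupp.linearCombination A fun p ↦
    q ^ (p.1 : ℕ) • vec A N p.1 (p.2 + 1) + coeffE q l p.1 p.2 • vec A N (p.1 - 1) p.2

variable (N) in
/-- The action of an element of the torus with image `c` in `A` which commutes with `E` up to the
scalar `m` and with `F` up to `m⁻¹`. -/
def actT (c : A) (m : k) : Module.End A (Induced A N) :=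
  Finsupp.linearCombination A fun p ↦ (m ^ (p.2 : ℕ) * m⁻¹ ^ (p.1 : ℕ)) • c • vec A N p.1 p.2

theorem linearCombination_vec {M : Type*} [AddCommGroup M] [Module A M] {f : ℕ → ℕ → M}
    (hf : ∀ a b, N ≤ a ∨ N ≤ b → f a b = 0) (a b : ℕ) :
    Finsupp.linearCombination A (fun p : Fin N × Fin N ↦ f p.1 p.2) (vec A N a b) = f a b := by
  by_cases h : a < N ∧ b < N
  · rw [vec_of_lt h.1 h.2, Finsupp.linearCombination_single, one_smul]
  · rw [vec_of_le (by omega), map_zero, hf a b (by omega)]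

theorem actF_vec (a b : ℕ) : actF A N (vec A N a b) = vec A N (a + 1) b :=
  linearCombination_vec (f := fun a b ↦ vec A N (a + 1) b) (fun _ _ _ ↦ vec_of_le (by omega)) a b

theorem actT_vec (c : A) (m : k) (a b : ℕ) :
    actT N c m (vec A N a b) = (m ^ b * m⁻¹ ^ a) • c • vec A N a b :=
  linearCombination_vec (f := fun a b ↦ (m ^ b * m⁻¹ ^ a) • c • vec A N a b)
    (fun a b h ↦ by simp only [vec_of_le h, smul_zero]) a b

theorem actE_vec (hq : IsPrimitiveRoot q N) (hN : 1 < N) (l : A) (a b : ℕ) :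
    actE N q l (vec A N a b) =
      q ^ a • vec A N a (b + 1) + coeffE q l a b • vec A N (a - 1) b := by
  refine linearCombination_vec
    (f := fun a b ↦ q ^ a • vec A N a (b + 1) + coeffE q l a b • vec A N (a - 1) b)
    (fun a b h ↦ ?_) a b
  have hcoeff : coeffE q l N b = 0 := by
    rw [coeffE, gauss, hq.geom_sum_eq_zero hN, zero_smul]
  obtain rfl | haN := eq_or_ne a N
  · simp only [hcoeff, vec_of_le (Or.inl le_rfl), smul_zero, zero_smul, add_zero]
  · have hab : N ≤ a - 1 ∨ N ≤ b := by omega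
    have hab' : N ≤ a ∨ N ≤ b + 1 := by omega
    simp only [vec_of_le hab, vec_of_le hab', smul_zero, add_zero]

theorem coeffE_zero (q : k) (l : A) (b : ℕ) : coeffE q l 0 b = 0 := by
  rw [coeffE, gauss, Finset.sum_range_zero, zero_smul]

theorem actF_pow_vec (s a b : ℕ) : (actF A N ^ s) (vec A N a b) = vec A N (a + s) b := by
  induction s with
  | zero => rfl
  | succ s ih => rw [pow_succ', Module.End.mul_apply, ih, actF_vec, add_assoc]

theorem actE_pow_vec_zero (hq : IsPrimitiveRoot q N) (hN : 1 < N) (l : A) (s b : ℕ) :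
    (actE N q l ^ s) (vec A N 0 b) = vec A N 0 (b + s) := by
  induction s with
  | zero => rfl
  | succ s ih =>
    rw [pow_succ', Module.End.mul_apply, ih, actE_vec hq hN, coeffE_zero, pow_zero, one_smul,
      zero_smul, add_zero, add_assoc]

theorem actT_mul (c c' : A) (m m' : k) :
    actT N c m * actT N c' m' = actT N (c * c') (m * m') := by
  refine hom_ext fun a b _ _ ↦ ?_
  rw [Module.End.mul_apply, actT_vec, LinearMap.map_smul_of_tower, map_smul, actT_vec, actT_vec,
    mul_inv, mul_pow, mul_pow, mul_smul c]
  simp only [smul_comm c']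
  module

theorem actT_one : actT N (1 : A) (1 : k) = 1 := by
  refine hom_ext fun a b _ _ ↦ ?_
  rw [actT_vec, inv_one, one_pow, one_pow, one_mul, one_smul, one_smul, Module.End.one_apply]

theorem actT_pow (c : A) (m : k) (s : ℕ) : actT N c m ^ s = actT N (c ^ s) (m ^ s) := by
  induction s with
  | zero => simp only [pow_zero, actT_one]
  | succ s ih => rw [pow_succ, ih, actT_mul, ← pow_succ, ← pow_succ]

theorem qCommute_actT_actF (c : A) (m : k) : QCommute m⁻¹ (actT N c m) (actF A N) := by
  refine hom_ext fun a b _ _ ↦ ?_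
  rw [LinearMap.smul_apply, Module.End.mul_apply, Module.End.mul_apply, actT_vec, actF_vec,
    LinearMap.map_smul_of_tower, map_smul, actF_vec, actT_vec]
  module

theorem qCommute_actT_actE {m : k} (hq : IsPrimitiveRoot q N) (hN : 1 < N) (hm : m ≠ 0)
    (c l : A) : QCommute m (actT N c m) (actE N q l) := by
  refine hom_ext fun a b _ _ ↦ ?_
  rw [LinearMap.smul_apply, Module.End.mul_apply, Module.End.mul_apply, actT_vec,
    LinearMap.map_smul_of_tower, map_smul, actE_vec hq hN, map_add, LinearMap.map_smul_of_tower,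
    map_smul, actT_vec, actT_vec]
  cases a with
  | zero =>
    rw [coeffE_zero]
    module
  | succ a =>
    have : m⁻¹ ^ a = m * m⁻¹ ^ (a + 1) := by rw [pow_succ', mul_inv_cancel_left₀ hm]
    rw [Nat.add_sub_cancel, this, smul_comm (coeffE _ _ _ _), smul_comm (coeffE _ _ _ _) c]
    module

theorem coeffE_eq_add (hq : q ≠ 0) (l : A) (a b : ℕ) :
    coeffE q l a b =
      q⁻¹ • coeffE q l (a + 1) b + (1 - ((q⁻¹ ^ 2) ^ b * (q⁻¹ ^ 2)⁻¹ ^ a) • l) := by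
  have hone : gauss k q a * q = gauss k q (a + 1) - 1 := by rw [gauss_succ']; ring
  have hl : gauss k q a * (q ^ a * (q⁻¹ ^ 2) ^ b) = gauss k q (a + 1) * (q ^ a * (q⁻¹ ^ 2) ^ b) -
      (q⁻¹ ^ 2) ^ b * (q⁻¹ ^ 2)⁻¹ ^ a := by
    have hinv : (q⁻¹ ^ 2)⁻¹ ^ a = q ^ a * q ^ a := by
      rw [← inv_pow, inv_inv, ← pow_mul, two_mul, pow_add]
    rw [gauss_succ, hinv]
    ring
  rw [coeffE, coeffE, pow_mul, smul_sub, smul_smul, smul_smul, hl, hone, smul_comm q⁻¹, smul_sub,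
    smul_smul, smul_smul, inv_mul_cancel₀ hq, pow_succ' q a, mul_assoc q, inv_mul_cancel_left₀ hq]
  module

theorem actF_mul_actE (hq : IsPrimitiveRoot q N) (hN : 1 < N) (l : A) :
    actF A N * actE N q l = q⁻¹ • (actE N q l * actF A N) + (1 - actT N l (q⁻¹ ^ 2)) := by
  have hq0 : q ≠ 0 := hq.ne_zero (by omega)
  refine hom_ext fun a b _ _ ↦ ?_
  have hpred : coeffE q l a b • vec A N (a - 1 + 1) b = coeffE q l a b • vec A N a b := by
    cases a with
    | zero => rw [coeffE_zero, zero_smul, zero_smul]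
    | succ a => rfl
  calc (actF A N * actE N q l) (vec A N a b)
      = q ^ a • vec A N (a + 1) (b + 1) + coeffE q l a b • vec A N a b := by
        rw [Module.End.mul_apply, actE_vec hq hN, map_add, LinearMap.map_smul_of_tower, map_smul,
          actF_vec, actF_vec, hpred]
    _ = q⁻¹ • (q ^ (a + 1) • vec A N (a + 1) (b + 1) + coeffE q l (a + 1) b • vec A N a b) +
          (vec A N a b - ((q⁻¹ ^ 2) ^ b * (q⁻¹ ^ 2)⁻¹ ^ a) • l • vec A N a b) := by
        rw [coeffE_eq_add hq0, smul_add, smul_smul q⁻¹, pow_succ' q a, inv_mul_cancel_left₀ hq0,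
          add_smul, sub_smul, one_smul, smul_assoc, smul_assoc, add_assoc]
    _ = (q⁻¹ • (actE N q l * actF A N) + (1 - actT N l (q⁻¹ ^ 2))) (vec A N a b) := by
        rw [LinearMap.add_apply, LinearMap.smul_apply, Module.End.mul_apply, actF_vec,
          actE_vec hq hN, Nat.add_sub_cancel, LinearMap.sub_apply, Module.End.one_apply, actT_vec]

theorem actF_pow_eq_zero : actF A N ^ N = 0 := by
  refine hom_ext fun a b _ _ ↦ ?_
  rw [actF_pow_vec, vec_of_le (by omega), LinearMap.zero_apply]

theorem actE_pow_eq_zero (hq : IsPrimitiveRoot q N) (hN : 1 < N) (l : A) :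
    actE N q l ^ N = 0 := by
  have hq0 : q ≠ 0 := hq.ne_zero (by omega)
  have hcomm : Commute (actF A N) (actE N q l ^ N) := by
    refine commute_pow_of_qCommutator (c := q⁻¹) (d := (1 : k)) (L := actT N l (q⁻¹ ^ 2)) hq.inv hN
      ?_ (qCommute_actT_actE hq hN (pow_ne_zero 2 (inv_ne_zero hq0)) l l)
    rw [one_smul, actF_mul_actE hq hN l]
  refine hom_ext fun a b _ _ ↦ ?_
  have hvec : vec A N a b = (actF A N ^ a) (vec A N 0 b) := by rw [actF_pow_vec, zero_add]
  rw [hvec, ← Module.End.mul_apply, ← (hcomm.pow_left a).eq, Module.End.mul_apply,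
    actE_pow_vec_zero hq hN, vec_of_le (by omega), map_zero, LinearMap.zero_apply]

theorem isTorusPair_actT (hn : 0 < n) (hq : IsPrimitiveRoot q (n ^ 2)) {κ η : A}
    (h : IsTorusPair n κ η) :
    IsTorusPair n (actT N κ (q ^ n)) (actT N η (q ^ n * (q ^ 2)⁻¹)) where
  pow_fst := by rw [actT_pow, h.pow_fst, pow_pow_eq_one hq, actT_one]
  pow_snd := by
    have hm : (q ^ n * (q ^ 2)⁻¹) ^ n = ((q ^ n) ^ (n - 1)) ^ 2 := by
      rw [mul_pow, pow_pow_eq_one hq, one_mul, pow_pow_sub_one hn hq, inv_pow, inv_pow,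
        pow_right_comm]
    rw [actT_pow, actT_pow, actT_pow, h.pow_snd, hm]

theorem relations_act (hn : 1 < n) (hq : IsPrimitiveRoot q (n ^ 2)) {κ η : A}
    (h : IsTorusPair n κ η) :
    Relations n q (actT (n ^ 2) κ (q ^ n)) (actT (n ^ 2) η (q ^ n * (q ^ 2)⁻¹))
      (actE (n ^ 2) q (κ ^ (n - 1) * η)) (actF A (n ^ 2)) := by
  have hN : 1 < n ^ 2 := one_lt_pow₀ hn two_ne_zero
  have hq0 : q ≠ 0 := hq.ne_zero (by omega)
  have hqn : q ^ n ≠ 0 := pow_ne_zero n hq0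
  have hqh : q ^ n * (q ^ 2)⁻¹ ≠ 0 := mul_ne_zero hqn (inv_ne_zero (pow_ne_zero 2 hq0))
  refine
    { isTorusPair := isTorusPair_actT (by omega) hq h
      commute := ?_
      qCommute_K_E := qCommute_actT_actE hq hN hqn _ _
      qCommute_K_F := qCommute_actT_actF _ _
      qCommute_Kh_E := qCommute_actT_actE hq hN hqh _ _
      qCommute_Kh_F := ?_
      E_pow := actE_pow_eq_zero hq hN _
      F_pow := actF_pow_eq_zero
      F_mul_E := ?_ }
  · rw [Commute, SemiconjBy, actT_mul, actT_mul, mul_comm κ, mul_comm (q ^ n)]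
  · simpa only [mul_inv, inv_inv] using qCommute_actT_actF (N := n ^ 2) η (q ^ n * (q ^ 2)⁻¹)
  · have hm : (q ^ n) ^ (n - 1) * (q ^ n * (q ^ 2)⁻¹) = q⁻¹ ^ 2 := by
      rw [pow_pow_sub_one (by omega) hq, inv_mul_cancel_left₀ hqn, inv_pow]
    rw [actT_pow, actT_mul, hm]
    exact actF_mul_actE hq hN _

theorem actE_apply_last (hq : IsPrimitiveRoot q N) (hN : 1 < N) (l : A) {s : ℕ}
    (hs : s + 1 < N) (x : Induced A N) :
    actE N q l x (⟨N - 1, by omega⟩, ⟨s + 1, hs⟩) =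
      q ^ (N - 1) • x (⟨N - 1, by omega⟩, ⟨s, by omega⟩) := by
  let coord (b : Fin N) : Induced A N →ₗ[A] A := Finsupp.lapply (⟨N - 1, by omega⟩, b)
  have coord_vec {a b c : ℕ} (ha : a < N) (hb : b < N) (hc : c < N) :
      coord ⟨c, hc⟩ (vec A N a b) = if a = N - 1 ∧ b = c then 1 else 0 := by
    simp only [coord, vec_of_lt ha hb, Finsupp.lapply_apply, Finsupp.single_apply, Prod.mk.injEq,
      Fin.mk.injEq]
  suffices h : coord ⟨s + 1, hs⟩ ∘ₗ actE N q l = q ^ (N - 1) • coord ⟨s, by omega⟩ from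
    LinearMap.congr_fun h x
  refine hom_ext fun a b ha hb ↦ ?_
  have hpred : coord ⟨s + 1, hs⟩ (vec A N (a - 1) b) = 0 := by
    rw [coord_vec (by omega) hb hs, if_neg (by omega)]
  rw [LinearMap.comp_apply, actE_vec hq hN, map_add, LinearMap.map_smul_of_tower, map_smul, hpred,
    smul_zero, add_zero, LinearMap.smul_apply, coord_vec ha hb]
  by_cases hab : a = N - 1 ∧ b = s
  · rw [coord_vec ha (by omega), if_pos (by omega), if_pos hab, hab.1]
  · obtain hb' | hb' := lt_or_ge (b + 1) N
    · rw [coord_vec ha hb', if_neg (by omega), if_neg hab, smul_zero, smul_zero]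
    · rw [vec_of_le (Or.inr hb'), map_zero, if_neg hab, smul_zero, smul_zero]

theorem actE_pow_actF_pow_vec_ne_zero [Nontrivial A] (hq : IsPrimitiveRoot q N)
    (hN : 1 < N) (l : A) :
    (actE N q l ^ (N - 1)) ((actF A N ^ (N - 1)) (vec A N 0 0)) ≠ 0 := by
  have hq0 : q ≠ 0 := hq.ne_zero (by omega)
  have hcoord (s : ℕ) (hs : s < N) :
      (actE N q l ^ s) (vec A N (N - 1) 0) (⟨N - 1, by omega⟩, ⟨s, hs⟩) =
        (q ^ (N - 1)) ^ s • (1 : A) := by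
    induction s with
    | zero => rw [vec_of_lt (by omega) hs, pow_zero, Module.End.one_apply, Finsupp.single_eq_same,
        pow_zero, one_smul]
    | succ s ih => rw [pow_succ', Module.End.mul_apply, actE_apply_last hq hN, ih, smul_smul,
        pow_succ']
  rw [actF_pow_vec, zero_add]
  intro h
  have hzero := hcoord (N - 1) (by omega)
  rw [h, Finsupp.zero_apply, Algebra.smul_def, mul_one, eq_comm,
    map_eq_zero_iff _ (algebraMap k A).injective] at hzero
  exact pow_ne_zero _ (pow_ne_zero _ hq0) hzero

theorem exists_algHom (hn : 1 < n) (hq : IsPrimitiveRoot q (n ^ 2)) {κ η : A}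
    (h : IsTorusPair n κ η) :
    ∃ ρ : U k n q →ₐ[k] Module.End A (Induced A (n ^ 2)),
      ρ (K k n q) = actT (n ^ 2) κ (q ^ n) ∧
      ρ (Kh k n q) = actT (n ^ 2) η (q ^ n * (q ^ 2)⁻¹) ∧
      ρ (E k n q) = actE (n ^ 2) q (κ ^ (n - 1) * η) ∧ ρ (F k n q) = actF A (n ^ 2) :=
  (relations_act hn hq h).exists_algHom (by omega)

theorem actT_vec_zero (c : A) (m : k) : actT N c m (vec A N 0 0) = c • vec A N 0 0 := by
  rw [actT_vec, pow_zero, pow_zero, mul_one, one_smul]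

end Induced

section PBW

theorem exists_eq_pow_mul_pow_of_mem_closure_pair {G : Type*} [Monoid G] {x y g : G}
    (hxy : Commute x y) (hg : g ∈ Submonoid.closure {x, y}) : ∃ a b, g = x ^ a * y ^ b := by
  induction hg using Submonoid.closure_induction with
  | mem g hg =>
    rcases hg with rfl | rfl
    exacts [⟨1, 0, by simp⟩, ⟨0, 1, by simp⟩]
  | one => exact ⟨0, 0, by simp⟩
  | mul g g' _ _ hg hg' =>
    obtain ⟨a, b, rfl⟩ := hg
    obtain ⟨a', b', rfl⟩ := hg'
    refine ⟨a + a', b + b', ?_⟩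
    rw [pow_add, pow_add, mul_assoc, mul_assoc, ← mul_assoc (y ^ b), ← mul_assoc (x ^ a'),
      (hxy.symm.pow_pow b a').eq]

theorem torus_le_span (hn : 0 < n) :
    Subalgebra.toSubmodule (torus k n q) ≤ Submodule.span k {t | ∃ c d, t = Kᵤ ^ c * Khᵤ ^ d} := by
  rw [torus, Algebra.adjoin_eq_span]
  exact Submodule.span_mono fun t ↦
    exists_eq_pow_mul_pow_of_mem_closure_pair (relations_generators k hn q).commute

theorem K_mem_torus : Kᵤ ∈ torus k n q := (torusK k n q).2

theorem Kh_mem_torus : Khᵤ ∈ torus k n q := (torusKh k n q).2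

theorem L_mem_torus : Lᵤ ∈ torus k n q := mul_mem (pow_mem K_mem_torus _) Kh_mem_torus

theorem Z_mem_torus : Zᵤ ∈ torus k n q := mul_mem K_mem_torus (pow_mem Kh_mem_torus _)

theorem exists_qCommute_pow_mul_pow (hn : 0 < n) (hq : q ≠ 0) (b c d : ℕ) :
    ∃ χ : k, χ ≠ 0 ∧ QCommute χ (Kᵤ ^ c * Khᵤ ^ d) (Eᵤ ^ b) := by
  have h := relations_generators k hn q
  refine ⟨_, ?_, (((h.qCommute_K_E.pow_left c).mul_left (h.qCommute_Kh_E.pow_left d)).pow_right b)⟩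
  positivity

theorem pbw_eq_span (hn : 0 < n) (hq : q ≠ 0) :
    pbw k n q = Submodule.span k
      {x | ∃ a b t, a ≤ n ^ 2 - 2 ∧ t ∈ torus k n q ∧ x = Fᵤ ^ a * Eᵤ ^ b * t} := by
  have h := relations_generators k hn q
  refine le_antisymm (Submodule.span_le.mpr ?_) (Submodule.span_le.mpr ?_)
  · rintro _ ⟨a, b, c, d, ha, -, -, -, rfl⟩
    obtain ⟨χ, -, hχ⟩ := exists_qCommute_pow_mul_pow (k := k) hn hq b c d
    have hx : Fᵤ ^ a * Kᵤ ^ c * Khᵤ ^ d * Eᵤ ^ b = χ • (Fᵤ ^ a * Eᵤ ^ b * (Kᵤ ^ c * Khᵤ ^ d)) := by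
      rw [mul_assoc _ (Kᵤ ^ c), mul_assoc, hχ, mul_smul_comm, ← mul_assoc]
    rw [SetLike.mem_coe, hx]
    exact Submodule.smul_mem _ χ <| Submodule.subset_span
      ⟨a, b, _, ha, mul_mem (pow_mem K_mem_torus c) (pow_mem Kh_mem_torus d), rfl⟩
  · rintro _ ⟨a, b, t, ha, ht, rfl⟩
    rw [SetLike.mem_coe, ← LinearMap.mulLeft_apply (R := k)]
    refine (Submodule.map_span_le _ _ _).mpr ?_ (Submodule.mem_map_of_mem (torus_le_span hn ht))
    rintro _ ⟨c, d, rfl⟩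
    rw [LinearMap.mulLeft_apply]
    obtain hb | hb := le_or_gt (n ^ 2) b
    · rw [pow_eq_zero_of_le hb h.E_pow, mul_zero, zero_mul]
      exact zero_mem _
    · obtain ⟨χ, hχ0, hχ⟩ := exists_qCommute_pow_mul_pow (k := k) hn hq b c d
      have hx : Fᵤ ^ a * Eᵤ ^ b * (Kᵤ ^ c * Khᵤ ^ d) =
          χ⁻¹ • (Fᵤ ^ a * Kᵤ ^ (c % n) * Khᵤ ^ (d % n ^ 2) * Eᵤ ^ b) := by
        rw [mul_assoc, hχ.symm hχ0, mul_smul_comm, pow_eq_pow_mod c h.isTorusPair.pow_fst,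
          pow_eq_pow_mod d h.isTorusPair.snd_pow_sq]
        simp only [mul_assoc]
      rw [hx]
      exact Submodule.smul_mem _ _ <| Submodule.subset_span ⟨a, b, _, _, ha, by omega,
        Nat.le_sub_one_of_lt (Nat.mod_lt c hn), Nat.le_sub_one_of_lt (Nat.mod_lt d (by omega)), rfl⟩

theorem mul_mem_pbw (hn : 0 < n) (hq : q ≠ 0) {c d : k} {x y : U k n q} (hx : x ∈ torus k n q)
    (hxE : QCommute c x Eᵤ) (hxF : QCommute d x Fᵤ) (hy : y ∈ pbw k n q) : x * y ∈ pbw k n q := by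
  rw [pbw_eq_span hn hq] at hy ⊢
  rw [← LinearMap.mulLeft_apply (R := k)]
  refine (Submodule.map_span_le _ _ _).mpr ?_ (Submodule.mem_map_of_mem hy)
  rintro _ ⟨a, b, t, ha, ht, rfl⟩
  rw [LinearMap.mulLeft_apply, hxE.mul_pow_mul_pow_mul hxF]
  exact Submodule.smul_mem _ _ (Submodule.subset_span ⟨a, b, _, ha, mul_mem hx ht, rfl⟩)

theorem E_mul_F_pow_succ_mul_E_pow_mul (hn : 0 < n) (hq : IsPrimitiveRoot q (n ^ 2)) (a b : ℕ)
    (t : U k n q) : Eᵤ * (Fᵤ ^ (a + 1) * Eᵤ ^ b * t) =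
      q ^ (a + 1) • (Fᵤ ^ (a + 1) * Eᵤ ^ (b + 1) * t) + (-q * gauss k q (a + 1)) •
        (Fᵤ ^ a * Eᵤ ^ b * (t - (q ^ a * (q⁻¹ ^ 2) ^ b) • (Lᵤ * t))) := by
  have hLE : Lᵤ * Eᵤ ^ b = (q⁻¹ ^ 2) ^ b • (Eᵤ ^ b * Lᵤ) := (qCommute_L_E hn hq).pow_right b
  rw [mul_assoc _ _ t, ← mul_assoc, mul_pow_succ_of_qCommutator
    (E_mul_F hn (hq.ne_zero (by positivity))) (qCommute_L_F hn hq) a, add_mul, smul_mul_assoc,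
    smul_mul_assoc, mul_assoc, ← mul_assoc Eᵤ, ← pow_succ', ← mul_assoc, mul_assoc (_ ^ a),
    sub_mul, one_mul, smul_mul_assoc, ← mul_assoc Lᵤ, hLE]
  simp only [mul_sub, mul_smul_comm, smul_mul_assoc, smul_smul, mul_assoc]

theorem mem_span_pow_mul_pow_mul (hn : 0 < n) (hq : IsPrimitiveRoot q (n ^ 2)) (u : U k n q) :
    u ∈ Submodule.span k {x | ∃ a b t, t ∈ torus k n q ∧ x = Fᵤ ^ a * Eᵤ ^ b * t} := by
  set T := Submodule.span k {x | ∃ a b t, t ∈ torus k n q ∧ x = Fᵤ ^ a * Eᵤ ^ b * t}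
  have h := relations_generators k hn q
  have mem_T {a b : ℕ} {t : U k n q} (ht : t ∈ torus k n q) : Fᵤ ^ a * Eᵤ ^ b * t ∈ T :=
    Submodule.subset_span ⟨a, b, t, ht, rfl⟩
  have mul_mem_T {x : U k n q} (hx : ∀ a b, ∀ t ∈ torus k n q, x * (Fᵤ ^ a * Eᵤ ^ b * t) ∈ T)
      (y : U k n q) (hy : y ∈ T) : x • y ∈ T := by
    rw [smul_eq_mul, ← LinearMap.mulLeft_apply (R := k)]
    refine (Submodule.map_span_le _ _ _).mpr ?_ (Submodule.mem_map_of_mem hy)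
    rintro _ ⟨a, b, t, ht, rfl⟩
    exact hx a b t ht
  have h1 : (1 : U k n q) ∈ T := by simpa using mem_T (a := 0) (b := 0) (one_mem _)
  rw [← mul_one u, ← smul_eq_mul]
  refine smul_mem_of_generators ?_ ?_ ?_ ?_ u h1 <;> refine mul_mem_T fun a b t ht ↦ ?_
  · rw [h.qCommute_K_E.mul_pow_mul_pow_mul h.qCommute_K_F]
    exact T.smul_mem _ (mem_T (mul_mem K_mem_torus ht))
  · rw [h.qCommute_Kh_E.mul_pow_mul_pow_mul h.qCommute_Kh_F]
    exact T.smul_mem _ (mem_T (mul_mem Kh_mem_torus ht))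
  · cases a with
    | zero =>
      simpa only [pow_zero, one_mul, ← mul_assoc, ← pow_succ'] using mem_T (a := 0) ht
    | succ a =>
      rw [E_mul_F_pow_succ_mul_E_pow_mul hn hq]
      exact add_mem (T.smul_mem _ (mem_T ht)) (T.smul_mem _ (mem_T
        (sub_mem ht (Subalgebra.smul_mem _ (mul_mem L_mem_torus ht) _))))
  · rw [← mul_assoc, ← mul_assoc, ← pow_succ']
    exact mem_T ht

theorem exists_mem_pbw_F_mul_eq (hn : 0 < n) (hq : IsPrimitiveRoot q (n ^ 2)) (u : U k n q) :
    ∃ y ∈ pbw k n q, Fᵤ * y = Fᵤ * u := by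
  have hq0 : q ≠ 0 := hq.ne_zero (by positivity)
  induction mem_span_pow_mul_pow_mul hn hq u using Submodule.span_induction with
  | zero => exact ⟨0, zero_mem _, rfl⟩
  | add x x' _ _ hx hx' =>
    obtain ⟨y, hy, hyx⟩ := hx
    obtain ⟨y', hy', hyx'⟩ := hx'
    exact ⟨y + y', add_mem hy hy', by rw [mul_add, mul_add, hyx, hyx']⟩
  | smul c x _ hx =>
    obtain ⟨y, hy, hyx⟩ := hx
    exact ⟨c • y, Submodule.smul_mem _ c hy, by rw [mul_smul_comm, mul_smul_comm, hyx]⟩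
  | mem x hx =>
    obtain ⟨a, b, t, ht, rfl⟩ := hx
    obtain ha | ha := le_or_gt a (n ^ 2 - 2)
    · rw [pbw_eq_span hn hq0]
      exact ⟨_, Submodule.subset_span ⟨a, b, t, ha, ht, rfl⟩, rfl⟩
    · refine ⟨0, zero_mem _, ?_⟩
      rw [mul_zero, ← mul_assoc, ← mul_assoc, ← pow_succ',
        pow_eq_zero_of_le (by omega) (relations_generators k hn q).F_pow, zero_mul, zero_mul]

theorem algHom_torus_apply {A V : Type*} [CommRing A] [Algebra k A] [AddCommMonoid V] [Module k V]
    [Module A V] [IsScalarTower k A V] (f : torus k n q →ₐ[k] A) (ρ : U k n q →ₐ[k] Module.End A V)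
    {v : V} (hK : ρ Kᵤ v = f (torusK k n q) • v) (hKh : ρ Khᵤ v = f (torusKh k n q) • v)
    (t : torus k n q) : ρ t v = f t • v := by
  obtain ⟨t, ht⟩ := t
  induction ht using Algebra.adjoin_induction with
  | mem t ht =>
    rcases ht with rfl | rfl
    exacts [hK, hKh]
  | algebraMap c =>
    have hf : f ⟨algebraMap k (U k n q) c, algebraMap_mem _ c⟩ = algebraMap k A c := f.commutes c
    rw [AlgHom.commutes, Module.algebraMap_end_apply, hf, algebraMap_smul]
  | add x y hx hy ihx ihy =>
    rw [map_add, LinearMap.add_apply, ihx, ihy, ← add_smul, ← map_add]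
    rfl
  | mul x y hx hy ihx ihy =>
    rw [map_mul, Module.End.mul_apply, ihy, map_smul, ihx, smul_smul, mul_comm,
      ← map_mul]
    rfl

theorem Induced.exists_algHom_torus [IsMulCommutative (torus k n q)] (hn : 1 < n)
    (hq : IsPrimitiveRoot q (n ^ 2)) :
    ∃ ρ : U k n q →ₐ[k] Module.End (torus k n q) (Induced (torus k n q) (n ^ 2)),
      ∀ a b, ∀ t : torus k n q,
        ρ (Fᵤ ^ a * Eᵤ ^ b * t) (vec (torus k n q) (n ^ 2) 0 0) =
          t • vec (torus k n q) (n ^ 2) a b := by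
  have hN : 1 < n ^ 2 := one_lt_pow₀ hn two_ne_zero
  have htorus : IsTorusPair n (torusK k n q) (torusKh k n q) := isTorusPair_torus (by omega)
  obtain ⟨ρ, hK, hKh, hE, hF⟩ := exists_algHom (A := torus k n q) hn hq htorus
  have ρ_torus (t : torus k n q) : ρ t (vec (torus k n q) (n ^ 2) 0 0) = t • vec _ _ 0 0 := by
    refine algHom_torus_apply (A := torus k n q) (V := Induced (torus k n q) (n ^ 2))
      (AlgHom.id k (torus k n q)) ρ ?_ ?_ t
    exacts [hK ▸ actT_vec_zero _ _, hKh ▸ actT_vec_zero _ _]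
  refine ⟨ρ, fun a b t ↦ ?_⟩
  rw [map_mul, map_mul, map_pow, map_pow, hE, hF, Module.End.mul_apply, Module.End.mul_apply,
    ρ_torus, map_smul, map_smul, actE_pow_vec_zero hq hN, actF_pow_vec, zero_add, zero_add]

theorem exists_leftInverse_F_mul (hn : 1 < n) (hq : IsPrimitiveRoot q (n ^ 2)) :
    ∃ g : U k n q →ₗ[k] U k n q, ∀ x ∈ pbw k n q, g (Fᵤ * x) = x := by
  have hN : 1 < n ^ 2 := one_lt_pow₀ hn two_ne_zero
  have := isMulCommutative_torus (k := k) (q := q) (by omega : 0 < n)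
  obtain ⟨ρ, hρ⟩ := Induced.exists_algHom_torus hn hq
  let e : U k n q →ₗ[k] Induced (torus k n q) (n ^ 2) :=
    (LinearMap.applyₗ (Induced.vec (torus k n q) (n ^ 2) 0 0)).restrictScalars k ∘ₗ ρ.toLinearMap
  let g : Induced (torus k n q) (n ^ 2) →ₗ[k] U k n q :=
    Finsupp.lsum k fun p ↦
      LinearMap.mulLeft k (Fᵤ ^ (p.1 - 1 : ℕ) * Eᵤ ^ (p.2 : ℕ)) ∘ₗ (torus k n q).val.toLinearMap
  refine ⟨g ∘ₗ e, fun x hx ↦ ?_⟩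
  rw [pbw_eq_span (by omega) (hq.ne_zero (by omega))] at hx
  refine LinearMap.eqOn_span (f := g ∘ₗ e ∘ₗ LinearMap.mulLeft k Fᵤ) (g := LinearMap.id) ?_ hx
  rintro _ ⟨a, b, t, ha, ht, rfl⟩
  have he : e (Fᵤ * (Fᵤ ^ a * Eᵤ ^ b * t)) =
      (⟨t, ht⟩ : torus k n q) • Induced.vec (torus k n q) (n ^ 2) (a + 1) b := by
    have hmul : Fᵤ * (Fᵤ ^ a * Eᵤ ^ b * t) = Fᵤ ^ (a + 1) * Eᵤ ^ b * t := by
      simp only [pow_succ', mul_assoc]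
    rw [hmul]
    exact hρ (a + 1) b ⟨t, ht⟩
  rw [LinearMap.comp_apply, LinearMap.comp_apply, LinearMap.mulLeft_apply, he]
  obtain hb | hb := lt_or_ge b (n ^ 2)
  · rw [Induced.vec_of_lt (by omega) hb, Finsupp.smul_single_one, Finsupp.lsum_single]
    rfl
  · rw [Induced.vec_of_le (Or.inr hb), smul_zero, map_zero,
      pow_eq_zero_of_le hb (relations_generators k (by omega) q).E_pow, mul_zero, zero_mul,
      map_zero]

theorem F_mul_injOn_pbw (hn : 1 < n) (hq : IsPrimitiveRoot q (n ^ 2)) :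
    Set.InjOn (Fᵤ * ·) (pbw k n q) := by
  obtain ⟨g, hg⟩ := exists_leftInverse_F_mul hn hq
  exact fun x hx y hy hxy ↦ by rw [← hg x hx, ← hg y hy]; exact congrArg g hxy

theorem F_pow_dvd_E_pow_mul_F_pow (hn : 0 < n) (hq : IsPrimitiveRoot q (n ^ 2)) (m : ℕ) :
    ∀ s, Fᵤ ^ s ∣ Eᵤ ^ m * Fᵤ ^ (s + m) := by
  induction m with
  | zero => exact fun s ↦ by rw [pow_zero, one_mul, add_zero]
  | succ m ih =>
    intro s
    have hE : Eᵤ ^ (m + 1) * Fᵤ ^ (s + (m + 1)) =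
        Eᵤ ^ m * Fᵤ ^ (s + 1 + m) * (q ^ (s + m + 1) • Eᵤ) + Eᵤ ^ m * Fᵤ ^ (s + m) *
          ((-q * gauss k q (s + m + 1)) • (1 - q ^ (s + m) • Lᵤ)) := by
      rw [pow_succ, mul_assoc, ← add_assoc, mul_pow_succ_of_qCommutator
        (E_mul_F hn (hq.ne_zero (by positivity))) (qCommute_L_F hn hq), mul_add, add_right_comm s]
      simp only [mul_smul_comm, mul_assoc]
    rw [hE]
    exact ((pow_dvd_pow Fᵤ s.le_succ).trans (ih (s + 1))).mul_right _ |>.add ((ih s).mul_right _)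

end PBW

section Gam

theorem existsUnique_mem_pbw_F_mul_eq (hn : 1 < n) (hq : IsPrimitiveRoot q (n ^ 2)) {u : U k n q}
    (hu : Fᵤ ∣ u) : ∃! x, x ∈ pbw k n q ∧ Fᵤ * x = u := by
  obtain ⟨u, rfl⟩ := hu
  obtain ⟨y, hy, hyu⟩ := exists_mem_pbw_F_mul_eq (by omega) hq u
  exact ⟨y, ⟨hy, hyu⟩, fun x hx ↦ F_mul_injOn_pbw hn hq hx.1 hy (hx.2.trans hyu.symm)⟩

theorem F_dvd_beta (hn : 1 < n) (hq : IsPrimitiveRoot q (n ^ 2)) {i : ℕ} (hi : 1 ≤ i)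
    (hin : i ≤ n ^ 2 / 2) (j : ℕ) : Fᵤ ∣ beta k n q i j := by
  have hN : 1 < n ^ 2 := one_lt_pow₀ hn two_ne_zero
  have hdvd := F_pow_dvd_E_pow_mul_F_pow (by omega) hq (2 * i - 2) (n ^ 2 + 1 - 2 * i)
  rw [(by omega : n ^ 2 + 1 - 2 * i + (2 * i - 2) = n ^ 2 - 1)] at hdvd
  rw [beta, alpha, ← mul_assoc]
  exact ((dvd_pow_self Fᵤ (by omega)).trans hdvd).mul_right _

theorem gam_spec (hn : 1 < n) (hq : IsPrimitiveRoot q (n ^ 2)) {i : ℕ} (hi : 1 ≤ i)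
    (hin : i ≤ n ^ 2 / 2) (j : ℕ) :
    gam k n q i j ∈ pbw k n q ∧ Fᵤ * gam k n q i j = beta k n q i j := by
  have h := existsUnique_mem_pbw_F_mul_eq hn hq (F_dvd_beta hn hq hi hin j)
  rw [gam, dif_pos h]
  exact h.choose_spec.1

theorem mul_eq_smul_of_mul_F_mul_eq_smul (hn : 1 < n) (hq : IsPrimitiveRoot q (n ^ 2)) {c d w : k}
    {x y : U k n q} (hx : x ∈ torus k n q) (hxE : QCommute c x Eᵤ) (hxF : QCommute d x Fᵤ)
    (hd : d ≠ 0) (hy : y ∈ pbw k n q) (hxy : x * (Fᵤ * y) = w • (Fᵤ * y)) :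
    x * y = (d⁻¹ * w) • y := by
  have hq0 : q ≠ 0 := hq.ne_zero (by positivity)
  refine F_mul_injOn_pbw hn hq (mul_mem_pbw (by omega) hq0 hx hxE hxF hy)
    (Submodule.smul_mem _ _ hy) ?_
  have hFx : Fᵤ * x = d⁻¹ • (x * Fᵤ) := hxF.symm hd
  simp only [mul_smul_comm]
  rw [← mul_assoc, hFx, smul_mul_assoc, mul_assoc, hxy, smul_smul]

end Gam

section Idempotents

/-- The eigenvalue `(-1)^j` of `KK̂^(n/2)` on `𝟙_j`, for `j ∈ {0, 1}`. -/
def sgn (k : Type) [Field k] (j : ℕ) : k := if j = 0 then 1 else -1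

theorem sgn_mul_self (j : ℕ) : sgn k j * sgn k j = 1 := by
  unfold sgn
  split_ifs <;> norm_num

theorem sgn_inj (h2 : (2 : k) ≠ 0) {j j' : ℕ} (hj : j ≤ 1) (hj' : j' ≤ 1)
    (h : sgn k j = sgn k j') : j = j' := by
  have h1 : (1 : k) ≠ -1 := fun h ↦ h2 (by linear_combination h)
  unfold sgn at h
  split_ifs at h
  exacts [by omega, (h1 h).elim, (h1 h.symm).elim, by omega]

theorem mul_geom_sum_inv_smul {R : Type*} [Ring R] [Algebra k R] {x : R} {w : k} {m : ℕ}
    (hw : w ≠ 0) (hx : (w⁻¹ • x) ^ m = 1) :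
    x * ∑ t ∈ Finset.range m, (w⁻¹ • x) ^ t = w • ∑ t ∈ Finset.range m, (w⁻¹ • x) ^ t := by
  rw [← inv_smul_eq_iff₀ hw, ← smul_mul_assoc, ← sub_eq_zero, ← sub_one_mul, mul_geom_sum, hx,
    sub_self]

theorem mul_one_add_smul {R : Type*} [Semiring R] [Algebra k R] {z : R} {s : k} (hz : z ^ 2 = 1)
    (hs : s * s = 1) : z * (1 + s • z) = s • (1 + s • z) := by
  rw [mul_add, mul_smul_comm, ← pow_two, hz, smul_add, smul_smul, hs, one_smul, mul_one, add_comm]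

theorem commute_smul_geom_sum_smul {R : Type*} [Semiring R] [Algebra k R] {x z : R}
    (h : Commute z x) (c w : k) (m : ℕ) :
    Commute z (c • ∑ t ∈ Finset.range m, (w • x) ^ t) :=
  (Commute.sum_right _ _ _ fun t _ ↦ (h.smul_right w).pow_right t).smul_right c

theorem oneJ_eq_smul (j : ℕ) : oneJ k n q j = (2 : k)⁻¹ • (1 + sgn k j • Zᵤ) := by
  unfold oneJ sgn
  split_ifs
  · rw [one_smul, Z]
  · have hZ : (-1 : k) • Zᵤ = -Zᵤ := neg_one_smul k Zᵤ
    rw [hZ, ← sub_eq_add_neg, Z]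

theorem phi_eq_geom_sum (i : ℕ) : phi k n q i = ((n ^ 2 : k)⁻¹ * 2) •
    ∑ t ∈ Finset.range (n ^ 2 / 2), (q⁻¹ ^ (2 * i) • Lᵤ) ^ t := by
  simp only [phi, smul_pow, L, pow_mul]

theorem commute_Z_phi (hn : 0 < n) (i : ℕ) : Commute Zᵤ (phi k n q i) := by
  rw [phi_eq_geom_sum]
  exact commute_smul_geom_sum_smul (commute_L_Z hn).symm _ _ _

theorem pow_two_mul_pow_half (h2 : 2 ∣ n) (hq : IsPrimitiveRoot q (n ^ 2)) (i : ℕ) :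
    (q ^ (2 * i)) ^ (n ^ 2 / 2) = 1 := by
  rw [← pow_mul, mul_right_comm, Nat.mul_div_cancel' (dvd_pow h2 two_ne_zero), pow_mul,
    hq.pow_eq_one, one_pow]

theorem L_mul_phi (hn : 0 < n) (h4 : 4 ∣ n) (hq : IsPrimitiveRoot q (n ^ 2)) (i : ℕ) :
    Lᵤ * phi k n q i = q ^ (2 * i) • phi k n q i := by
  have hw : q ^ (2 * i) ≠ 0 := pow_ne_zero _ (hq.ne_zero (by positivity))
  have hL : (q⁻¹ ^ (2 * i) • Lᵤ) ^ (n ^ 2 / 2) = 1 := by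
    rw [smul_pow, L_pow_half hn h4, pow_two_mul_pow_half (dvd_of_mul_right_dvd (b := 2) h4) hq.inv,
      one_smul]
  rw [inv_pow] at hL
  rw [phi_eq_geom_sum, mul_smul_comm, inv_pow]
  exact (congrArg (_ • ·) (mul_geom_sum_inv_smul hw hL)).trans (smul_comm _ _ _)

theorem Z_mul_oneJ (hn : 0 < n) (h2 : 2 ∣ n) (j : ℕ) :
    Zᵤ * oneJ k n q j = sgn k j • oneJ k n q j := by
  rw [oneJ_eq_smul, mul_smul_comm, mul_one_add_smul (Z_sq hn h2) (sgn_mul_self j), smul_comm]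

theorem L_mul_eIdem (hn : 0 < n) (h4 : 4 ∣ n) (hq : IsPrimitiveRoot q (n ^ 2)) (i j : ℕ) :
    Lᵤ * eIdem k n q i j = q ^ (2 * i) • eIdem k n q i j := by
  rw [eIdem, ← mul_assoc, L_mul_phi hn h4 hq, smul_mul_assoc]

theorem Z_mul_eIdem (hn : 0 < n) (h2 : 2 ∣ n) (i j : ℕ) :
    Zᵤ * eIdem k n q i j = sgn k j • eIdem k n q i j := by
  rw [eIdem, ← mul_assoc, (commute_Z_phi hn i).eq, mul_assoc, Z_mul_oneJ hn h2, mul_smul_comm]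

theorem natCast_sq_ne_zero (hn : 0 < n) (hq : IsPrimitiveRoot q (n ^ 2)) : (n ^ 2 : k) ≠ 0 := by
  have : NeZero (n ^ 2) := ⟨by positivity⟩
  exact_mod_cast hq.neZero'.out

theorem two_ne_zero_of_isPrimitiveRoot (hn : 0 < n) (h2 : 2 ∣ n) (hq : IsPrimitiveRoot q (n ^ 2)) :
    (2 : k) ≠ 0 := by
  obtain ⟨m, rfl⟩ := h2
  have h := natCast_sq_ne_zero hn hq
  push_cast at h
  exact left_ne_zero_of_mul (pow_ne_zero_iff two_ne_zero |>.mp h)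

theorem algHom_eIdem_apply (hn : 0 < n) (h2 : 2 ∣ n) (hq : IsPrimitiveRoot q (n ^ 2)) {V : Type*}
    [AddCommGroup V] [Module k V] (ρ : U k n q →ₐ[k] Module.End k V) {i j : ℕ} {v : V}
    (hL : ρ Lᵤ v = q ^ (2 * i) • v) (hZ : ρ Zᵤ v = sgn k j • v) : ρ (eIdem k n q i j) v = v := by
  have hw : q ^ (2 * i) ≠ 0 := pow_ne_zero _ (hq.ne_zero (by positivity))
  have hk2 : (2 : k) ≠ 0 := two_ne_zero_of_isPrimitiveRoot hn h2 hq
  have honeJ : ρ (oneJ k n q j) v = v := by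
    rw [oneJ_eq_smul, map_smul, map_add, map_one, map_smul, LinearMap.smul_apply,
      LinearMap.add_apply, LinearMap.smul_apply, hZ, smul_smul, sgn_mul_self, one_smul,
      Module.End.one_apply, ← two_smul k, inv_smul_smul₀ hk2]
  have hterm (t : ℕ) : ρ ((q⁻¹ ^ (2 * i) • Lᵤ) ^ t) v = v := by
    rw [map_pow, Module.End.pow_apply]
    refine Function.iterate_fixed ?_ t
    rw [map_smul, LinearMap.smul_apply, hL, inv_pow, inv_smul_smul₀ hw]
  have hcard : (n ^ 2 : k)⁻¹ * 2 * (n ^ 2 / 2 : ℕ) = 1 := by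
    rw [Nat.cast_div (dvd_pow h2 two_ne_zero) (by exact_mod_cast hk2)]
    push_cast
    rw [mul_assoc, mul_div_cancel₀ _ hk2, inv_mul_cancel₀ (natCast_sq_ne_zero hn hq)]
  rw [eIdem, map_mul, Module.End.mul_apply, honeJ, phi_eq_geom_sum, map_smul, map_sum,
    LinearMap.smul_apply, LinearMap.sum_apply, Finset.sum_congr rfl fun t _ ↦ hterm t,
    Finset.sum_const, Finset.card_range, ← Nat.cast_smul_eq_nsmul k, smul_smul, hcard, one_smul]

theorem E_pow_mul_alpha_ne_zero (hn : 0 < n) (h4 : 4 ∣ n) (hq : IsPrimitiveRoot q (n ^ 2))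
    (i j : ℕ) : Eᵤ ^ (n ^ 2 - 1) * alpha k n q i j ≠ 0 := by
  have hn1 : 1 < n := (by norm_num : 1 < 4).trans_le (Nat.le_of_dvd hn h4)
  have hN : 1 < n ^ 2 := one_lt_pow₀ hn1 two_ne_zero
  have h2 : 2 ∣ n := dvd_of_mul_right_dvd (b := 2) h4
  obtain ⟨κ, η, hκη, hl, hz⟩ := IsTorusPair.exists_of_pow_eq_one hn h4
    (pow_two_mul_pow_half h2 hq i) ((pow_two _).trans (sgn_mul_self (k := k) j))
  obtain ⟨ρ, hK, hKh, hE, hF⟩ := Induced.exists_algHom hn1 hq hκη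
  have hL : ρ Lᵤ (Induced.vec k (n ^ 2) 0 0) = q ^ (2 * i) • Induced.vec k (n ^ 2) 0 0 := by
    rw [L, Kinv, map_mul, map_pow, hK, hKh, Induced.actT_pow, Induced.actT_mul,
      Induced.actT_vec_zero, hl]
  have hZ : ρ Zᵤ (Induced.vec k (n ^ 2) 0 0) = sgn k j • Induced.vec k (n ^ 2) 0 0 := by
    rw [Z, map_mul, map_pow, hK, hKh, Induced.actT_pow, Induced.actT_mul,
      Induced.actT_vec_zero, hz]
  have hρ : ρ (Eᵤ ^ (n ^ 2 - 1) * alpha k n q i j) (Induced.vec k (n ^ 2) 0 0) ≠ 0 := by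
    rw [alpha, map_mul, map_mul, map_pow, map_pow, hE, hF, Module.End.mul_apply,
      Module.End.mul_apply, algHom_eIdem_apply hn h2 hq ρ hL hZ]
    exact Induced.actE_pow_actF_pow_vec_ne_zero hq hN _
  exact fun h ↦ hρ (by rw [h, map_zero, LinearMap.zero_apply])

end Idempotents

section LinkedPair

theorem odd_sq_sub_one (hn : 0 < n) (h2 : 2 ∣ n) : Odd (n ^ 2 - 1) :=
  Nat.Even.sub_odd (Nat.one_le_pow _ _ hn) ((even_iff_two_dvd.mpr h2).pow_of_ne_zero two_ne_zero)
    odd_one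

theorem weight_coeff_ne_zero (hq : IsPrimitiveRoot q (n ^ 2)) {s m : ℕ} (hs : s + 1 < n ^ 2)
    (hm : m ≠ 0) (hmn : m < n ^ 2) {c : k} (hc : c = q⁻¹ ^ m) :
    gauss k q⁻¹ (s + 1) * (1 - c) ≠ 0 :=
  mul_ne_zero (gauss_ne_zero hq.inv s.succ_ne_zero hs)
    (sub_ne_zero.mpr (hc ▸ (hq.inv.pow_ne_one_of_pos_of_lt hm hmn).symm))

theorem inv_pow_mul_pow (hq : q ≠ 0) {s p : ℕ} (h : p ≤ s) : q⁻¹ ^ s * q ^ p = q⁻¹ ^ (s - p) := by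
  obtain ⟨m, rfl⟩ := Nat.exists_eq_add_of_le h
  rw [Nat.add_sub_cancel_left, add_comm, pow_add, mul_assoc, ← mul_pow, inv_mul_cancel₀ hq, one_pow,
    mul_one]

variable {M : Type*} [AddCommGroup M] [Module (U k n q) M] {p : ℕ} {ε : k} {α γ x : M}

theorem E_smul_E_pow_smul (hn : 0 < n) (x : M) : Eᵤ • Eᵤ ^ (n ^ 2 - 1) • x = 0 := by
  rw [smul_smul, ← pow_succ', Nat.sub_one_add_one (by positivity),
    (relations_generators k hn q).E_pow, zero_smul]

variable [Module k M]

variable (n q) in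
/-- Two weight vectors `α` and `γ` linked by `F • γ = E^p • α`, where `α` is a lowest weight vector
generating a string of maximal length under `E`. The weights are those of `α_{2i,j}` and
`γ_{2i,j}` for `p = 2i - 2` and `ε = (-1)^j`. -/
structure IsLinkedPair (p : ℕ) (ε : k) (α γ : M) : Prop where
  lt : p + 1 < n ^ 2
  F_smul_left : Fᵤ • α = 0
  L_smul_left : Lᵤ • α = q ^ p • α
  Z_smul_left : Zᵤ • α = (-ε) • α
  F_smul_right : Fᵤ • γ = Eᵤ ^ p • α
  L_smul_right : Lᵤ • γ = q⁻¹ ^ (p + 2) • γ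
  Z_smul_right : Zᵤ • γ = ε • γ
  E_pow_smul_ne_zero : Eᵤ ^ (n ^ 2 - 1) • α ≠ 0

namespace IsLinkedPair

theorem E_pow_smul_socle (h : IsLinkedPair n q p ε α γ) :
    Eᵤ ^ (n ^ 2 - (p + 2)) • Eᵤ ^ (p + 1) • α = Eᵤ ^ (n ^ 2 - 1) • α := by
  have := h.lt
  rw [smul_smul, ← pow_add, (by omega : n ^ 2 - (p + 2) + (p + 1) = n ^ 2 - 1)]

theorem socle_ne_zero (h : IsLinkedPair n q p ε α γ) : Eᵤ ^ (p + 1) • α ≠ 0 := fun h0 ↦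
  h.E_pow_smul_ne_zero <| by rw [← h.E_pow_smul_socle, h0, smul_zero]

theorem top_mem_span (h : IsLinkedPair n q p ε α γ) :
    Eᵤ ^ (n ^ 2 - 1) • α ∈ Submodule.span (U k n q) {γ} := by
  refine Submodule.mem_span_singleton.mpr ⟨Eᵤ ^ (n ^ 2 - 1 - p) * Fᵤ, ?_⟩
  have := h.lt
  rw [mul_smul, h.F_smul_right, smul_smul, ← pow_add, (by omega : n ^ 2 - 1 - p + p = n ^ 2 - 1)]

variable (n q) in
/-- The span over `k` of the two strings `E^s • α` and `E^s • γ`. -/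
def strings (α γ : M) : Submodule k M :=
  Submodule.span k {y | ∃ s x, (x = α ∨ x = γ) ∧ y = Eᵤ ^ s • x}

variable (n q) in
theorem mem_strings (s : ℕ) (hx : x = α ∨ x = γ) : Eᵤ ^ s • x ∈ strings n q α γ :=
  Submodule.subset_span ⟨s, x, hx, rfl⟩

end IsLinkedPair

variable [IsScalarTower k (U k n q) M]

theorem F_smul_E_pow_succ_smul (hn : 0 < n) (hq : IsPrimitiveRoot q (n ^ 2)) {l : k}
    (hx : Lᵤ • x = l • x) (s : ℕ) :
    Fᵤ • Eᵤ ^ (s + 1) • x = q⁻¹ ^ (s + 1) • Eᵤ ^ (s + 1) • Fᵤ • x +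
      (gauss k q⁻¹ (s + 1) * (1 - q⁻¹ ^ s * l)) • Eᵤ ^ s • x := by
  have h := smul_pow_succ_smul_of_qCommutator (F_mul_E hn) (qCommute_L_E hn hq) hx s
  rwa [one_mul] at h

namespace IsLinkedPair

theorem L_smul_top (hn : 0 < n) (hq : IsPrimitiveRoot q (n ^ 2)) (h : IsLinkedPair n q p ε α γ) :
    Lᵤ • Eᵤ ^ (n ^ 2 - 1) • α = q ^ (p + 2) • Eᵤ ^ (n ^ 2 - 1) • α := by
  have hc : (q⁻¹ ^ 2) ^ (n ^ 2 - 1) = q ^ 2 := by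
    rw [← inv_inv (q ^ 2), ← inv_pow]
    refine eq_inv_of_mul_eq_one_left ?_
    rw [← pow_succ, Nat.sub_one_add_one (by positivity), pow_right_comm, hq.inv.pow_eq_one, one_pow]
  rw [(qCommute_L_E hn hq).smul_pow_smul h.L_smul_left, hc, ← pow_add, add_comm]

theorem Z_smul_top (hn : 0 < n) (h4 : 4 ∣ n) (hq : IsPrimitiveRoot q (n ^ 2))
    (h : IsLinkedPair n q p ε α γ) : Zᵤ • Eᵤ ^ (n ^ 2 - 1) • α = ε • Eᵤ ^ (n ^ 2 - 1) • α := by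
  have hodd := odd_sq_sub_one hn (dvd_of_mul_right_dvd (b := 2) h4)
  rw [(qCommute_Z_E hn h4 hq).smul_pow_smul h.Z_smul_left, hodd.neg_one_pow, neg_mul_neg, one_mul]

theorem F_smul_socle_left (hn : 0 < n) (hq : IsPrimitiveRoot q (n ^ 2))
    (h : IsLinkedPair n q p ε α γ) : Fᵤ • Eᵤ ^ (p + 1) • α = 0 := by
  rw [F_smul_E_pow_succ_smul hn hq h.L_smul_left, h.F_smul_left, smul_zero, smul_zero,
    inv_pow_mul_pow (hq.ne_zero (by positivity)) le_rfl, Nat.sub_self, pow_zero, sub_self, mul_zero,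
    zero_smul, zero_add]

theorem exists_F_pow_smul_top_left (hn : 0 < n) (hq : IsPrimitiveRoot q (n ^ 2))
    (h : IsLinkedPair n q p ε α γ) {t : ℕ} (ht : n ^ 2 = p + 2 + t) :
    ∃ c : k, c ≠ 0 ∧ Fᵤ ^ t • Eᵤ ^ (n ^ 2 - 1) • α = c • Eᵤ ^ (p + 1) • α := by
  have hq0 : q ≠ 0 := hq.ne_zero (by positivity)
  rw [(by omega : n ^ 2 - 1 = p + 1 + t)]
  refine exists_pow_smul_eq_smul (x := fun s ↦ Eᵤ ^ s • α) fun s hs hst ↦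
    ⟨gauss k q⁻¹ (s + 1) * (1 - q⁻¹ ^ s * q ^ p), ?_, ?_⟩
  · exact weight_coeff_ne_zero hq (m := s - p) (by omega) (by omega) (by omega)
      (inv_pow_mul_pow hq0 (by omega))
  · rw [F_smul_E_pow_succ_smul hn hq h.L_smul_left, h.F_smul_left, smul_zero, smul_zero, zero_add]

theorem F_pow_smul_top_left (hn : 0 < n) (hq : IsPrimitiveRoot q (n ^ 2))
    (h : IsLinkedPair n q p ε α γ) : Fᵤ ^ (n ^ 2 - 1) • Eᵤ ^ (n ^ 2 - 1) • α = 0 := by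
  obtain ⟨t, ht⟩ := Nat.exists_eq_add_of_le (Nat.succ_le_of_lt h.lt)
  obtain ⟨c, -, hc⟩ := h.exists_F_pow_smul_top_left hn hq ht
  have hpow : Fᵤ ^ (n ^ 2 - 1) = Fᵤ ^ p * Fᵤ * Fᵤ ^ t := by
    rw [← pow_succ, ← pow_add, (by omega : n ^ 2 - 1 = p + 1 + t)]
  rw [hpow, mul_smul, hc, mul_smul, smul_algebra_smul_comm, h.F_smul_socle_left hn hq, smul_zero,
    smul_zero]

theorem F_smul_socle_right (hn : 0 < n) (hq : IsPrimitiveRoot q (n ^ 2))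
    (h : IsLinkedPair n q p ε α γ) {t : ℕ} (ht : n ^ 2 = p + 2 + t) :
    Fᵤ • Eᵤ ^ (t + 1) • γ = q⁻¹ ^ (t + 1) • Eᵤ ^ (n ^ 2 - 1) • α := by
  rw [F_smul_E_pow_succ_smul hn hq h.L_smul_right, h.F_smul_right, ← pow_add,
    (by omega : t + (p + 2) = n ^ 2), hq.inv.pow_eq_one, sub_self, mul_zero, zero_smul, add_zero,
    smul_smul (_ ^ _), ← pow_add, (by omega : t + 1 + p = n ^ 2 - 1)]

theorem exists_F_pow_smul_top_right (hn : 0 < n) (hq : IsPrimitiveRoot q (n ^ 2))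
    (h : IsLinkedPair n q p ε α γ) {t : ℕ} (ht : n ^ 2 = p + 2 + t) :
    ∃ c : k, c ≠ 0 ∧ Fᵤ ^ p • Eᵤ ^ (n ^ 2 - 1) • γ = c • Eᵤ ^ (t + 1) • γ := by
  rw [(by omega : n ^ 2 - 1 = t + 1 + p)]
  refine exists_pow_smul_eq_smul (x := fun s ↦ Eᵤ ^ s • γ) fun s hs hst ↦
    ⟨gauss k q⁻¹ (s + 1) * (1 - q⁻¹ ^ s * q⁻¹ ^ (p + 2)), ?_, ?_⟩
  · refine weight_coeff_ne_zero hq (m := s - t) (by omega) (by omega) (by omega) ?_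
    rw [← pow_add, (by omega : s + (p + 2) = n ^ 2 + (s - t)), pow_add, hq.inv.pow_eq_one, one_mul]
  · rw [F_smul_E_pow_succ_smul hn hq h.L_smul_right, h.F_smul_right, smul_smul (_ ^ (s + 1)),
      ← pow_add, pow_eq_zero_of_le (by omega) (relations_generators k hn q).E_pow, zero_smul,
      smul_zero, zero_add]

theorem exists_F_pow_smul_top_right_eq_socle (hn : 0 < n) (hq : IsPrimitiveRoot q (n ^ 2))
    (h : IsLinkedPair n q p ε α γ) : ∃ c : k, c ≠ 0 ∧
      Fᵤ ^ (n ^ 2 - 1) • Eᵤ ^ (n ^ 2 - 1) • γ = c • Eᵤ ^ (p + 1) • α := by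
  obtain ⟨t, ht⟩ := Nat.exists_eq_add_of_le (Nat.succ_le_of_lt h.lt)
  obtain ⟨c, hc, hα⟩ := h.exists_F_pow_smul_top_left hn hq ht
  obtain ⟨d, hd, hγ⟩ := h.exists_F_pow_smul_top_right hn hq ht
  have hpow : Fᵤ ^ (n ^ 2 - 1) = Fᵤ ^ t * Fᵤ * Fᵤ ^ p := by
    rw [← pow_succ, ← pow_add, (by omega : n ^ 2 - 1 = t + 1 + p)]
  refine ⟨d * q⁻¹ ^ (t + 1) * c, mul_ne_zero (mul_ne_zero hd (pow_ne_zero _ ?_)) hc, ?_⟩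
  · exact inv_ne_zero (hq.ne_zero (by positivity))
  · rw [hpow, mul_smul, hγ, smul_algebra_smul_comm, mul_smul, h.F_smul_socle_right hn hq ht,
      smul_algebra_smul_comm, hα, smul_smul, smul_smul, mul_assoc]

theorem right_coeff_eq_zero_of_F_pow_smul_eq_zero (hn : 0 < n) (hq : IsPrimitiveRoot q (n ^ 2))
    (h : IsLinkedPair n q p ε α γ) {a b : k}
    (hab : Fᵤ ^ (n ^ 2 - 1) • (a • Eᵤ ^ (n ^ 2 - 1) • α + b • Eᵤ ^ (n ^ 2 - 1) • γ) = 0) :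
    b = 0 := by
  obtain ⟨c, hc, hγ⟩ := h.exists_F_pow_smul_top_right_eq_socle hn hq
  rw [smul_add, smul_algebra_smul_comm, smul_algebra_smul_comm, h.F_pow_smul_top_left hn hq, hγ,
    smul_zero, zero_add, smul_smul] at hab
  exact ((mul_eq_zero.mp ((smul_eq_zero.mp hab).resolve_right h.socle_ne_zero))).resolve_right hc

theorem smul_mem_strings {u : U k n q}
    (hu : ∀ s x, (x = α ∨ x = γ) → u • Eᵤ ^ s • x ∈ strings n q α γ) :
    ∀ y ∈ strings n q α γ, u • y ∈ strings n q α γ := by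
  intro y hy
  refine (Submodule.map_span_le (Algebra.lsmul k k M u) _ _).mpr ?_ (Submodule.mem_map_of_mem hy)
  rintro _ ⟨s, x, hx, rfl⟩
  exact hu s x hx

theorem L_smul_mem_strings (hn : 0 < n) (hq : IsPrimitiveRoot q (n ^ 2))
    (h : IsLinkedPair n q p ε α γ) : ∀ y ∈ strings n q α γ, Lᵤ • y ∈ strings n q α γ := by
  refine smul_mem_strings fun s x hx ↦ ?_
  obtain ⟨l, hl⟩ : ∃ l : k, Lᵤ • x = l • x := by
    rcases hx with rfl | rfl
    exacts [⟨_, h.L_smul_left⟩, ⟨_, h.L_smul_right⟩]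
  rw [(qCommute_L_E hn hq).smul_pow_smul hl]
  exact Submodule.smul_mem _ _ (mem_strings n q s hx)

theorem Z_smul_mem_strings (hn : 0 < n) (h4 : 4 ∣ n) (hq : IsPrimitiveRoot q (n ^ 2))
    (h : IsLinkedPair n q p ε α γ) : ∀ y ∈ strings n q α γ, Zᵤ • y ∈ strings n q α γ := by
  refine smul_mem_strings fun s x hx ↦ ?_
  obtain ⟨z, hz⟩ : ∃ z : k, Zᵤ • x = z • x := by
    rcases hx with rfl | rfl
    exacts [⟨_, h.Z_smul_left⟩, ⟨_, h.Z_smul_right⟩]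
  rw [(qCommute_Z_E hn h4 hq).smul_pow_smul hz]
  exact Submodule.smul_mem _ _ (mem_strings n q s hx)

theorem F_smul_mem_strings (hn : 0 < n) (hq : IsPrimitiveRoot q (n ^ 2))
    (h : IsLinkedPair n q p ε α γ) : ∀ y ∈ strings n q α γ, Fᵤ • y ∈ strings n q α γ := by
  refine smul_mem_strings fun s x hx ↦ ?_
  have hEF (s : ℕ) : Eᵤ ^ s • Fᵤ • x ∈ strings n q α γ := by
    rcases hx with rfl | rfl
    · rw [h.F_smul_left, smul_zero]
      exact zero_mem _
    · rw [h.F_smul_right, smul_smul, ← pow_add]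
      exact mem_strings n q _ (Or.inl rfl)
  obtain ⟨l, hl⟩ : ∃ l : k, Lᵤ • x = l • x := by
    rcases hx with rfl | rfl
    exacts [⟨_, h.L_smul_left⟩, ⟨_, h.L_smul_right⟩]
  cases s with
  | zero => simpa only [pow_zero, one_smul] using hEF 0
  | succ s =>
    rw [F_smul_E_pow_succ_smul hn hq hl]
    exact add_mem (Submodule.smul_mem _ _ (hEF (s + 1)))
      (Submodule.smul_mem _ _ (mem_strings n q s hx))

theorem smul_mem_strings_right (hn : 0 < n) (h4 : 4 ∣ n) (hq : IsPrimitiveRoot q (n ^ 2))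
    (h : IsLinkedPair n q p ε α γ) (u : U k n q) : u • γ ∈ strings n q α γ := by
  have hL := h.L_smul_mem_strings hn hq
  have hLpow (r : ℕ) : ∀ y ∈ strings n q α γ, Lᵤ ^ r • y ∈ strings n q α γ := by
    induction r with
    | zero => exact fun y hy ↦ by rwa [pow_zero, one_smul]
    | succ r ih => exact fun y hy ↦ by rw [pow_succ, mul_smul]; exact ih _ (hL y hy)
  have hK : ∀ y ∈ strings n q α γ, Kᵤ • y ∈ strings n q α γ := fun y hy ↦ by
    obtain ⟨r, hr⟩ := exists_K_eq_Z_mul_L_pow (k := k) (q := q) hn h4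
    rw [hr, mul_smul]
    exact h.Z_smul_mem_strings hn h4 hq _ (hLpow r y hy)
  have hKh : ∀ y ∈ strings n q α γ, Khᵤ • y ∈ strings n q α γ := fun y hy ↦ by
    rw [Kh_eq_K_mul_L hn, mul_smul]
    exact hK _ (hL y hy)
  have hE : ∀ y ∈ strings n q α γ, Eᵤ • y ∈ strings n q α γ := smul_mem_strings fun s x hx ↦ by
    rw [smul_smul, ← pow_succ']
    exact mem_strings n q _ hx
  refine smul_mem_of_generators hK hKh hE (h.F_smul_mem_strings hn hq) u ?_
  simpa only [pow_zero, one_smul] using mem_strings n q (α := α) 0 (Or.inr rfl)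

theorem exists_eq_of_E_smul_eq_zero (hn : 0 < n) (h4 : 4 ∣ n) (hq : IsPrimitiveRoot q (n ^ 2))
    (h : IsLinkedPair n q p ε α γ) {y : M} (hy : y ∈ Submodule.span (U k n q) {γ})
    (hEy : Eᵤ • y = 0) :
    ∃ a b : k, y = a • Eᵤ ^ (n ^ 2 - 1) • α + b • Eᵤ ^ (n ^ 2 - 1) • γ := by
  set f : Module.End k M := Algebra.lsmul k k M Eᵤ with hf
  have f_pow (s : ℕ) (x : M) : (f ^ s) x = Eᵤ ^ s • x := by rw [hf, ← map_pow]; rfl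
  let W : Submodule k M := Submodule.span k {α, γ}
  have strings_le : strings n q α γ ≤ ⨆ s, W.map (f ^ s) := Submodule.span_le.mpr <| by
    rintro _ ⟨s, x, hx, rfl⟩
    exact Submodule.mem_iSup_of_mem s ⟨x, Submodule.subset_span hx, f_pow s x⟩
  have f_pow_eq_zero : f ^ (n ^ 2 - 1 + 1) = 0 := LinearMap.ext fun x ↦ by
    rw [pow_succ', Module.End.mul_apply, f_pow]
    exact E_smul_E_pow_smul hn x
  have injOn_W : ∀ x ∈ W, (f ^ (n ^ 2 - 1)) x = 0 → x = 0 := by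
    intro x hx hx0
    obtain ⟨a, b, rfl⟩ := Submodule.mem_span_pair.mp hx
    rw [f_pow, smul_add, smul_algebra_smul_comm, smul_algebra_smul_comm] at hx0
    obtain rfl : b = 0 := h.right_coeff_eq_zero_of_F_pow_smul_eq_zero hn hq (by rw [hx0, smul_zero])
    rw [zero_smul, add_zero, smul_eq_zero, or_iff_left h.E_pow_smul_ne_zero] at hx0
    rw [hx0, zero_smul, zero_smul, add_zero]
  obtain ⟨u, rfl⟩ := Submodule.mem_span_singleton.mp hy
  obtain ⟨x, hx, hxy⟩ := mem_map_pow_of_mem_iSup_map_pow f_pow_eq_zero injOn_W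
    (strings_le (h.smul_mem_strings_right hn h4 hq u)) hEy
  obtain ⟨a, b, rfl⟩ := Submodule.mem_span_pair.mp hx
  refine ⟨a, b, ?_⟩
  rw [← hxy, f_pow, smul_add, smul_algebra_smul_comm, smul_algebra_smul_comm]

theorem exists_eq_smul_top (hn : 0 < n) (h4 : 4 ∣ n) (hq : IsPrimitiveRoot q (n ^ 2))
    (h : IsLinkedPair n q p ε α γ) {y : M} (hy : y ∈ Submodule.span (U k n q) {γ})
    (hEy : Eᵤ • y = 0) (hFy : Fᵤ ^ (n ^ 2 - 1) • y = 0) :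
    ∃ a : k, y = a • Eᵤ ^ (n ^ 2 - 1) • α := by
  obtain ⟨a, b, rfl⟩ := h.exists_eq_of_E_smul_eq_zero hn h4 hq hy hEy
  obtain rfl := h.right_coeff_eq_zero_of_F_pow_smul_eq_zero hn hq hFy
  exact ⟨a, by rw [zero_smul, add_zero]⟩

theorem top_mem_of_ne_bot (hn : 0 < n) (h4 : 4 ∣ n) (hq : IsPrimitiveRoot q (n ^ 2))
    (h : IsLinkedPair n q p ε α γ) {X : Submodule (U k n q) M}
    (hX : X ≤ Submodule.span (U k n q) {γ}) (hX0 : X ≠ ⊥) : Eᵤ ^ (n ^ 2 - 1) • α ∈ X := by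
  have hE : IsNilpotent Eᵤ := ⟨n ^ 2, (relations_generators k hn q).E_pow⟩
  have mem_of_smul_mem {c : k} (hc : c ≠ 0) {x : M} (hx : c • x ∈ X) : x ∈ X := by
    have := X.smul_mem (algebraMap k (U k n q) c⁻¹) hx
    rwa [algebraMap_smul, inv_smul_smul₀ hc] at this
  obtain ⟨y, hyX, hy0, hEy⟩ := exists_mem_ne_zero_smul_eq_zero_of_isNilpotent hE hX0
  obtain ⟨a, b, rfl⟩ := h.exists_eq_of_E_smul_eq_zero hn h4 hq (hX hyX) hEy
  obtain rfl | hb := eq_or_ne b 0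
  · rw [zero_smul, add_zero] at hyX hy0
    exact mem_of_smul_mem (left_ne_zero_of_smul hy0) hyX
  · obtain ⟨c, hc, hγ⟩ := h.exists_F_pow_smul_top_right_eq_socle hn hq
    have hFy := X.smul_mem (Fᵤ ^ (n ^ 2 - 1)) hyX
    rw [smul_add, smul_algebra_smul_comm, smul_algebra_smul_comm, h.F_pow_smul_top_left hn hq, hγ,
      smul_zero, zero_add, smul_smul] at hFy
    rw [← h.E_pow_smul_socle]
    exact X.smul_mem _ (mem_of_smul_mem (mul_ne_zero hb hc) hFy)

theorem socle_eq (hn : 0 < n) (h4 : 4 ∣ n) (hq : IsPrimitiveRoot q (n ^ 2))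
    (h : IsLinkedPair n q p ε α γ) :
    sSup {X : Submodule (U k n q) M | X ≤ Submodule.span (U k n q) {γ} ∧ IsSimpleModule (U k n q) X}
      = Submodule.span (U k n q) {Eᵤ ^ (n ^ 2 - 1) • α} :=
  sSup_simple_eq_span_singleton h.E_pow_smul_ne_zero h.top_mem_span
    fun _ ↦ h.top_mem_of_ne_bot hn h4 hq

theorem weights_eq_of_linearMap (hn : 0 < n) (h4 : 4 ∣ n) (hq : IsPrimitiveRoot q (n ^ 2))
    {M' : Type*} [AddCommGroup M'] [Module k M'] [Module (U k n q) M']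
    [IsScalarTower k (U k n q) M'] {p' : ℕ} {ε' : k} {α' γ' : M'} (h : IsLinkedPair n q p ε α γ)
    (h' : IsLinkedPair n q p' ε' α' γ')
    (f : Submodule.span (U k n q) {Eᵤ ^ (n ^ 2 - 1) • α} →ₗ[U k n q]
      Submodule.span (U k n q) {Eᵤ ^ (n ^ 2 - 1) • α'}) (hf : Function.Injective f) :
    p = p' ∧ ε = ε' := by
  let v : M := Eᵤ ^ (n ^ 2 - 1) • α
  let v₀ : Submodule.span (U k n q) {v} := ⟨v, Submodule.mem_span_singleton_self v⟩
  let y : M' := f v₀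
  have hy0 : y ≠ 0 := fun hy ↦ h.E_pow_smul_ne_zero <| congrArg Subtype.val <|
    (map_eq_zero_iff f hf).mp (Subtype.ext hy : f v₀ = 0)
  have smul_y {u : U k n q} {c : k} (hu : u • v = c • v) : u • y = c • y := by
    have hu₀ : u • v₀ = c • v₀ := Subtype.ext hu
    have hf₀ : u • f v₀ = c • f v₀ := by rw [← map_smul, hu₀, LinearMap.map_smul_of_tower]
    exact congrArg Subtype.val hf₀
  have hy : y ∈ Submodule.span (U k n q) {γ'} :=
    (Submodule.span_singleton_le_iff_mem _ _).mpr h'.top_mem_span (f v₀).2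
  have hEy : Eᵤ • y = 0 := by
    simpa only [zero_smul] using smul_y ((E_smul_E_pow_smul hn α).trans (zero_smul k v).symm)
  have hFy : Fᵤ ^ (n ^ 2 - 1) • y = 0 := by
    simpa only [zero_smul] using smul_y ((h.F_pow_smul_top_left hn hq).trans (zero_smul k v).symm)
  obtain ⟨a, ha⟩ := h'.exists_eq_smul_top hn h4 hq hy hEy hFy
  have eq_of_smul_eq {u : U k n q} {c c' : k} (hc : u • v = c • v)
      (hc' : u • Eᵤ ^ (n ^ 2 - 1) • α' = c' • Eᵤ ^ (n ^ 2 - 1) • α') : c = c' := by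
    refine smul_left_injective k hy0 ((smul_y hc).symm.trans ?_)
    change u • y = c' • y
    rw [ha, smul_algebra_smul_comm, hc', smul_comm]
  have hpow : q ^ (p + 2) = q ^ (p' + 2) := eq_of_smul_eq (h.L_smul_top hn hq) (h'.L_smul_top hn hq)
  have hq0 : q ≠ 0 := hq.ne_zero (by positivity)
  rw [pow_add, pow_add, mul_left_inj' (pow_ne_zero 2 hq0)] at hpow
  exact ⟨hq.pow_inj (by have := h.lt; omega) (by have := h'.lt; omega) hpow,
    eq_of_smul_eq (h.Z_smul_top hn h4 hq) (h'.Z_smul_top hn h4 hq)⟩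

end IsLinkedPair

end LinkedPair

section Socle

theorem L_mul_alpha (hn : 0 < n) (h4 : 4 ∣ n) (hq : IsPrimitiveRoot q (n ^ 2)) {i : ℕ} (hi : 1 ≤ i)
    (j : ℕ) : Lᵤ * alpha k n q i j = q ^ (2 * i - 2) • alpha k n q i j := by
  have hw : (q ^ 2) ^ (n ^ 2 - 1) * q ^ (2 * i) = q ^ (2 * i - 2) := by
    rw [(by omega : 2 * i = 2 + (2 * i - 2)), pow_add q, ← mul_assoc, ← pow_succ,
      Nat.sub_one_add_one (by positivity), pow_right_comm, hq.pow_eq_one, one_pow, one_mul,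
      Nat.add_sub_cancel_left]
  exact hw ▸ (qCommute_L_F hn hq).smul_pow_smul (L_mul_eIdem hn h4 hq i j) (n ^ 2 - 1)

theorem Z_mul_alpha (hn : 0 < n) (h4 : 4 ∣ n) (hq : IsPrimitiveRoot q (n ^ 2)) (i j : ℕ) :
    Zᵤ * alpha k n q i j = (-sgn k j) • alpha k n q i j := by
  have h2 : 2 ∣ n := dvd_of_mul_right_dvd (b := 2) h4
  have hw : (-1) ^ (n ^ 2 - 1) * sgn k j = -sgn k j := by
    rw [(odd_sq_sub_one hn h2).neg_one_pow, neg_one_mul]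
  exact hw ▸ (qCommute_Z_F hn h4 hq).smul_pow_smul (Z_mul_eIdem hn h2 i j) (n ^ 2 - 1)

theorem L_mul_gam (hn : 0 < n) (h4 : 4 ∣ n) (hq : IsPrimitiveRoot q (n ^ 2)) {i : ℕ} (hi : 1 ≤ i)
    (hin : i ≤ n ^ 2 / 2) (j : ℕ) : Lᵤ * gam k n q i j = q⁻¹ ^ (2 * i) • gam k n q i j := by
  have hn1 : 1 < n := (by norm_num : 1 < 4).trans_le (Nat.le_of_dvd hn h4)
  have hq0 : q ≠ 0 := hq.ne_zero (by positivity)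
  obtain ⟨hγ, hFγ⟩ := gam_spec hn1 hq hi hin j
  have hβ : Lᵤ * beta k n q i j = ((q⁻¹ ^ 2) ^ (2 * i - 2) * q ^ (2 * i - 2)) • beta k n q i j :=
    (qCommute_L_E hn hq).smul_pow_smul (L_mul_alpha hn h4 hq hi j) (2 * i - 2)
  have hw : (q ^ 2)⁻¹ * ((q⁻¹ ^ 2) ^ (2 * i - 2) * q ^ (2 * i - 2)) = q⁻¹ ^ (2 * i) := by
    rw [← mul_pow, pow_two q⁻¹, mul_assoc, inv_mul_cancel₀ hq0, mul_one, ← inv_pow, ← pow_add,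
      (by omega : 2 + (2 * i - 2) = 2 * i)]
  exact hw ▸ mul_eq_smul_of_mul_F_mul_eq_smul hn1 hq L_mem_torus (qCommute_L_E hn hq)
    (qCommute_L_F hn hq) (pow_ne_zero 2 hq0) hγ (hFγ ▸ hβ)

theorem Z_mul_gam (hn : 0 < n) (h4 : 4 ∣ n) (hq : IsPrimitiveRoot q (n ^ 2)) {i : ℕ} (hi : 1 ≤ i)
    (hin : i ≤ n ^ 2 / 2) (j : ℕ) : Zᵤ * gam k n q i j = sgn k j • gam k n q i j := by
  have hn1 : 1 < n := (by norm_num : 1 < 4).trans_le (Nat.le_of_dvd hn h4)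
  obtain ⟨hγ, hFγ⟩ := gam_spec hn1 hq hi hin j
  have hβ : Zᵤ * beta k n q i j = ((-1) ^ (2 * i - 2) * -sgn k j) • beta k n q i j :=
    (qCommute_Z_E hn h4 hq).smul_pow_smul (Z_mul_alpha hn h4 hq i j) (2 * i - 2)
  have hw : (-1 : k)⁻¹ * ((-1) ^ (2 * i - 2) * -sgn k j) = sgn k j := by
    have heven : Even (2 * i - 2) := (even_two_mul i).tsub even_two
    rw [heven.neg_one_pow, one_mul, inv_neg_one, neg_one_mul, neg_neg]
  exact hw ▸ mul_eq_smul_of_mul_F_mul_eq_smul hn1 hq Z_mem_torus (qCommute_Z_E hn h4 hq)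
    (qCommute_Z_F hn h4 hq) (neg_ne_zero.mpr one_ne_zero) hγ (hFγ ▸ hβ)

theorem isLinkedPair_alpha_gam (hn : 0 < n) (h4 : 4 ∣ n) (hq : IsPrimitiveRoot q (n ^ 2)) {i : ℕ}
    (hi : 1 ≤ i) (hin : i ≤ n ^ 2 / 2) (j : ℕ) :
    IsLinkedPair n q (2 * i - 2) (sgn k j) (alpha k n q i j) (gam k n q i j) where
  lt := by omega
  F_smul_left := by
    rw [smul_eq_mul, alpha, ← mul_assoc, ← pow_succ', Nat.sub_one_add_one (by positivity),
      (relations_generators k hn q).F_pow, zero_mul]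
  L_smul_left := L_mul_alpha hn h4 hq hi j
  Z_smul_left := Z_mul_alpha hn h4 hq i j
  F_smul_right :=
    (gam_spec ((by norm_num : 1 < 4).trans_le (Nat.le_of_dvd hn h4)) hq hi hin j).2
  L_smul_right := by
    rw [Nat.sub_add_cancel (by omega)]
    exact L_mul_gam hn h4 hq hi hin j
  Z_smul_right := Z_mul_gam hn h4 hq hi hin j
  E_pow_smul_ne_zero := E_pow_mul_alpha_ne_zero hn h4 hq i j

theorem S_eq_span (hn : 0 < n) (h4 : 4 ∣ n) (hq : IsPrimitiveRoot q (n ^ 2)) {i : ℕ} (hi : 1 ≤ i)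
    (hin : i ≤ n ^ 2 / 2) (j : ℕ) :
    S k n q i j = Submodule.span (U k n q) {Eᵤ ^ (n ^ 2 - 1) • alpha k n q i j} :=
  (isLinkedPair_alpha_gam hn h4 hq hi hin j).socle_eq hn h4 hq

theorem weights_eq_of_linearEquiv (hn : 0 < n) (h4 : 4 ∣ n) (hq : IsPrimitiveRoot q (n ^ 2))
    {i j i' j' : ℕ} (hi : 1 ≤ i) (hin : i ≤ n ^ 2 / 2) (hi' : 1 ≤ i') (hin' : i' ≤ n ^ 2 / 2)
    (f : S k n q i j ≃ₗ[U k n q] S k n q i' j') : i = i' ∧ sgn k j = sgn k j' := by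
  rw [S_eq_span hn h4 hq hi hin, S_eq_span hn h4 hq hi' hin'] at f
  obtain ⟨hp, hε⟩ := (isLinkedPair_alpha_gam hn h4 hq hi hin j).weights_eq_of_linearMap hn h4 hq
    (isLinkedPair_alpha_gam hn h4 hq hi' hin' j') f.toLinearMap f.injective
  exact ⟨by omega, hε⟩

end Socle

theorem statement11_general (k : Type) [Field k] (n : ℕ) (hn : 0 < n) (h4 : 4 ∣ n) (q : k)
    (hq : IsPrimitiveRoot q (n ^ 2)) :
    ∀ i j i' j' : ℕ, 1 ≤ i → i ≤ n ^ 2 / 2 → j ≤ 1 → 1 ≤ i' → i' ≤ n ^ 2 / 2 → j' ≤ 1 →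
      (Nonempty ((S k n q i j) ≃ₗ[U k n q] (S k n q i' j')) ↔ (i = i' ∧ j = j')) := by
  intro i j i' j' hi hin hj hi' hin' hj'
  refine ⟨fun ⟨f⟩ ↦ ?_, ?_⟩
  · obtain ⟨hii', hjj'⟩ := weights_eq_of_linearEquiv hn h4 hq hi hin hi' hin' f
    have h2 : (2 : k) ≠ 0 :=
      two_ne_zero_of_isPrimitiveRoot hn (dvd_of_mul_right_dvd (b := 2) h4) hq
    exact ⟨hii', sgn_inj h2 hj hj' hjj'⟩
  · rintro ⟨rfl, rfl⟩
    exact ⟨LinearEquiv.refl _ _⟩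

end QFL

open QFL in
/-- Lemma 2.7: `S_{2i,j} ≅ S_{2i',j'}` if and only if `i = i'` and `j = j'`. -/
theorem statement11 (k : Type) [Field k] [IsAlgClosed k] [CharZero k]
    (n : ℕ) (hn : 0 < n) (h4 : 4 ∣ n) (q : k) (hq : IsPrimitiveRoot q (n ^ 2)) :
    ∀ i j i' j' : ℕ, 1 ≤ i → i ≤ n ^ 2 / 2 → j ≤ 1 → 1 ≤ i' → i' ≤ n ^ 2 / 2 → j' ≤ 1 →
      (Nonempty ((S k n q i j) ≃ₗ[U k n q] (S k n q i' j')) ↔ (i = i' ∧ j = j')) :=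
  statement11_general k n hn h4 q hq
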